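/- arXiv:1905.04940 — 10 statements merged into one kernel-verified Lean document; each statement's English description precedes it below -/
import Mathlib

section
/- Let q be a prime power and F_q the finite field with q elements. Let n and n' be coprime positive integers, N = n·n', and M a positive integer. Let U^0, …, U^{M−1} be sequences U^i = (u^i_t)_{t=0}^{n−1} over F_q and φ : F_q → F_q a function such that for every triple (i, j, τ) with 0 ≤ i, j ≤ M−1 and 0 ≤ τ ≤ n−1, excluding the case (i = j and τ = 0), there is a constant c(i,j,τ) ∈ F_q \ {0}, independent of t, with φ(u^i_{(t+τ) mod n}) − φ(u^j_{t mod n}) = c(i,j,τ) for all integers t (property A_u). Let v = (v_0, …, v_{n'−1}) ∈ F_q^{n'} and ψ : F_q → F_q be such that for every b ∈ F_q and every τ with 1 ≤ τ ≤ n'−1, the number of t ∈ {0, …, n'−1} with ψ(v_{(t+τ) mod n'}) − ψ(v_{t mod n'}) = b is at most 1 (property A_v). Define M sequences S^i = (s^i_t)_{t=0}^{N−1} by s^i_t = φ(u^i_{t mod n}) + ψ(v_{t mod n'}). Then for every window length L with 1 ≤ L ≤ N, the maximum partial Hamming correlation satisfies M(𝓢; L) ≤ ⌈L/n'⌉, where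 𝓢 = {S^0, …, S^{M−1}}. -/
/-!
Write a coincidence of `S^i` at `t` with `S^j` at `t + τ` as
`ψ(v_{t+τ}) - ψ(v_t) = -(φ(u^j_{t+τ}) - φ(u^i_t))`. By property A_u (or trivially, when `i = j` and
`n ∣ τ`) the right-hand side is `-b` for a constant `b` that does not depend on `t`.

If `n' ∣ τ`, the left-hand side vanishes; then `n ∤ τ` or `i ≠ j` (as `n` and `n'` are coprime and
`τ < n * n'`), so `b ≠ 0` and there are no coincidences at all. If `n' ∤ τ`, property A_v says that
all coincidences lie in one residue class modulo `n'` (`modEq_of_diff_eq`), and a window of length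
`L` meets such a class at most `⌈L / n'⌉` times (`card_window_le`).
-/

/-- Partial Hamming correlation of the length-`N` (cyclically indexed) sequences
`x` and `y`, over a window of length `L` starting at `l`, with shift `τ`. -/
noncomputable def Hcorr {A : Type*} (N L l τ : ℕ) (x y : ℕ → A) : ℕ :=
  Nat.card {t : ℕ | l ≤ t ∧ t < l + L ∧ x (t % N) = y ((t + τ) % N)}

/-- A subset of a window of length `L` contained in a single residue class modulo `m` has at most
`⌈L / m⌉` elements: `t ↦ (t - l) / m` is injective on it. -/
lemma card_window_le {m L l : ℕ} (hm : 0 < m) (T : Set ℕ)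
    (hT : ∀ t ∈ T, l ≤ t ∧ t < l + L)
    (hmod : ∀ t ∈ T, ∀ t' ∈ T, t ≡ t' [MOD m]) :
    Nat.card T ≤ (L + m - 1) / m := by
  rw [Nat.card_coe_set_eq, ← Finset.card_range ((L + m - 1) / m), ← Set.ncard_coe_finset]
  refine Set.ncard_le_ncard_of_injOn (fun t => (t - l) / m) ?_ ?_ (Finset.finite_toSet _)
  · intro t ht
    obtain ⟨h1, h2⟩ := hT t ht
    simp only [Finset.coe_range, Set.mem_Iio]
    calc (t - l) / m < (t - l + m) / m := by rw [Nat.add_div_right _ hm]; omega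
      _ ≤ (L + m - 1) / m := Nat.div_le_div_right (by omega)
  · intro t ht t' ht' h
    obtain ⟨h1, -⟩ := hT t ht
    obtain ⟨h1', -⟩ := hT t' ht'
    have hc : (t - l) ≡ (t' - l) [MOD m] := by
      apply Nat.ModEq.add_right_cancel' l
      rw [Nat.sub_add_cancel h1, Nat.sub_add_cancel h1']
      exact hmod t ht t' ht'
    have e1 := Nat.div_add_mod (t - l) m
    have e2 := Nat.div_add_mod (t' - l) m
    have hc' : (t - l) % m = (t' - l) % m := hc
    simp only at h
    rw [h, hc'] at e1
    omega

/-- Property A_v in the form used: for a shift `τ` not divisible by `m`, any two integers at which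
the difference function of `w` takes the same value are congruent modulo `m`. -/
lemma modEq_of_diff_eq {F : Type*} [Field F] {m : ℕ} (hm : 0 < m) (w : ℕ → F)
    (hw : ∀ b : F, ∀ τ : ℕ, 1 ≤ τ → τ ≤ m - 1 →
      Nat.card {t : ℕ | t < m ∧ w ((t + τ) % m) - w (t % m) = b} ≤ 1)
    {τ t t' : ℕ} {b : F} (hτ : τ % m ≠ 0)
    (h : w ((t + τ) % m) - w (t % m) = b) (h' : w ((t' + τ) % m) - w (t' % m) = b) :
    t ≡ t' [MOD m] := by
  have hlt := Nat.mod_lt τ hm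
  have hcard := hw b (τ % m) (by omega) (by omega)
  have hfin : {t : ℕ | t < m ∧ w ((t + τ % m) % m) - w (t % m) = b}.Finite :=
    (Set.finite_Iio m).subset fun x hx => hx.1
  rw [Nat.card_coe_set_eq, Set.ncard_le_one hfin] at hcard
  refine hcard (t % m) ⟨Nat.mod_lt _ hm, ?_⟩ (t' % m) ⟨Nat.mod_lt _ hm, ?_⟩
  · rw [← Nat.add_mod, Nat.mod_mod, h]
  · rw [← Nat.add_mod, Nat.mod_mod, h']

theorem stmt0 {F : Type*} [Field F] [Fintype F]
    (n n' M : ℕ) (hn : 0 < n) (hn' : 0 < n') (hM : 0 < M)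
    (hcop : Nat.Coprime n n') (N : ℕ) (hN : N = n * n')
    (u : ℕ → ℕ → F) (φ ψ : F → F) (v : ℕ → F)
    -- property A_u
    (hAu : ∀ i < M, ∀ j < M, ∀ τ < n, ¬(i = j ∧ τ = 0) →
      ∃ c : F, c ≠ 0 ∧ ∀ t : ℕ, φ (u i ((t + τ) % n)) - φ (u j (t % n)) = c)
    -- property A_v
    (hAv : ∀ b : F, ∀ τ : ℕ, 1 ≤ τ → τ ≤ n' - 1 →
      Nat.card {t : ℕ | t < n' ∧ ψ (v ((t + τ) % n')) - ψ (v (t % n')) = b} ≤ 1)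
    (s : ℕ → ℕ → F)
    (hs : ∀ i t, s i t = φ (u i (t % n)) + ψ (v (t % n'))) :
    ∀ L : ℕ, 1 ≤ L → L ≤ N →
      ∀ i < M, ∀ j < M, ∀ l < N, ∀ τ < N, ¬(i = j ∧ τ = 0) →
        Hcorr N L l τ (s i) (s j) ≤ (L + n' - 1) / n' := by
  intro L _ _ i hi j hj l _ τ hτ hne
  subst hN
  refine card_window_le hn' _ (fun t ht => ⟨ht.1, ht.2.1⟩) ?_
  obtain ⟨b, hb, hb0⟩ : ∃ b : F, (∀ t, φ (u j ((t + τ) % n)) - φ (u i (t % n)) = b) ∧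
      (b = 0 → i = j ∧ τ % n = 0) := by
    by_cases hij : j = i ∧ τ % n = 0
    · obtain ⟨rfl, h0⟩ := hij
      refine ⟨0, fun t => ?_, fun _ => ⟨rfl, h0⟩⟩
      rw [Nat.add_mod, h0, Nat.add_zero, Nat.mod_mod, sub_self]
    · obtain ⟨c, hc, hct⟩ := hAu j hj i hi (τ % n) (Nat.mod_lt _ hn) hij
      refine ⟨c, fun t => ?_, fun h => absurd h hc⟩
      rw [← hct t, Nat.add_mod_mod]
  have key : ∀ t, s i (t % (n * n')) = s j ((t + τ) % (n * n')) →
      ψ (v ((t + τ) % n')) - ψ (v (t % n')) = -b := by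
    intro t ht
    rw [hs, hs, Nat.mod_mul_right_mod, Nat.mod_mul_left_mod, Nat.mod_mul_right_mod,
      Nat.mod_mul_left_mod] at ht
    rw [← hb t]
    linear_combination -ht
  intro t ht t' ht'
  have k := key t ht.2.2
  have k' := key t' ht'.2.2
  by_cases h0 : τ % n' = 0
  · exfalso
    rw [Nat.add_mod, h0, Nat.add_zero, Nat.mod_mod, sub_self] at k
    obtain ⟨hij, hτn⟩ := hb0 (neg_eq_zero.mp k.symm)
    have hdvd : n * n' ∣ τ :=
      hcop.mul_dvd_of_dvd_of_dvd (Nat.dvd_of_mod_eq_zero hτn) (Nat.dvd_of_mod_eq_zero h0)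
    exact hne ⟨hij, Nat.eq_zero_of_dvd_of_lt hdvd hτ⟩
  · exact modEq_of_diff_eq hn' (fun k => ψ (v k)) hAv h0 k k'
end

section
/- Let q be a prime power, n and n' coprime positive integers, N = n·n', and M a positive integer. Let U^0, …, U^{M−1} be sequences U^i = (u^i_t)_{t=0}^{n−1} over F_q and φ : F_q → F_q a function such that for every triple (i, j, τ) with 0 ≤ i, j ≤ M−1 and 0 ≤ τ ≤ n−1, excluding the case (i = j and τ = 0), there is a constant c(i,j,τ) ∈ F_q \ {0}, independent of t, with φ(u^i_{(t+τ) mod n}) − φ(u^j_{t mod n}) = c(i,j,τ) for all integers t (property A_u). Let v ∈ F_q^{n'} and ψ : F_q → F_q be such that for every b ∈ F_q and every τ with 1 ≤ τ ≤ n'−1, the number of t ∈ {0, …, n'−1} with ψ(v_{(t+τ) mod n'}) − ψ(v_{t mod n'}) = b is at most 1 (property A_v). Define s^i_t = φ(u^i_{t mod n}) + ψ(v_{t mod n'}). Then for every pair (i, j) and every integer τ such that it is not the case that i = j and τ ≡ 0 (mod N), and for every integer l, the number of t with l ≤ t ≤ l + n' − 1 such that s^i_{t mod N} = s^j_{(t+τ)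 mod N} is at most 1. -/
/-!
A coincidence `s i t = s j (t + τ)` says that the increment of
`φ ∘ u` and the increment of `ψ ∘ v` under the shift add up to zero. By property A_u the first
increment is a constant `c`, with `c ≠ 0` unless `i = j` and `n ∣ τ`.

If `n' ∣ τ`, the second increment vanishes, so a coincidence forces `c = 0`, hence `i = j` and
`n ∣ τ`; coprimality then gives `N ∣ τ`, which is excluded. If `n' ∤ τ`, the residue of `t` modulo
`n'` solves the equation of property A_v with right-hand side `-c`, so this residue is
unique, and a window of `n'` consecutive integers contains only one `t` with that residue.
-/

/-- Reduction modulo `N` followed by reduction modulo a divisor `m` of `N`. -/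
lemma toNat_emod_mod {N m : ℕ} (hN : 0 < N) (h : m ∣ N) (t : ℤ) :
    (t % N).toNat % m = (t % m).toNat := by
  have hm : 0 < m := Nat.pos_of_dvd_of_pos h hN
  zify
  rw [Int.toNat_of_nonneg (Int.emod_nonneg _ (by omega)),
    Int.toNat_of_nonneg (Int.emod_nonneg _ (by omega)),
    Int.emod_emod_of_dvd _ (by exact_mod_cast h)]

lemma toNat_add_emod {m : ℕ} (hm : 0 < m) (t x : ℤ) :
    ((t + x) % m).toNat = ((t % m).toNat + (x % m).toNat) % m := by
  zify
  rw [Int.toNat_of_nonneg (Int.emod_nonneg _ (by omega)),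
    Int.toNat_of_nonneg (Int.emod_nonneg _ (by omega)),
    Int.toNat_of_nonneg (Int.emod_nonneg _ (by omega)), ← Int.add_emod]

theorem stmt1 {F : Type*} [Field F] [Fintype F]
    (n n' M : ℕ) (hn : 0 < n) (hn' : 0 < n') (hM : 0 < M)
    (hcop : Nat.Coprime n n') (N : ℕ) (hN : N = n * n')
    (u : ℕ → ℕ → F) (φ ψ : F → F) (v : ℕ → F)
    -- property A_u
    (hAu : ∀ i < M, ∀ j < M, ∀ τ < n, ¬(i = j ∧ τ = 0) →
      ∃ c : F, c ≠ 0 ∧ ∀ t : ℕ, φ (u i ((t + τ) % n)) - φ (u j (t % n)) = c)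
    -- property A_v
    (hAv : ∀ b : F, ∀ τ : ℕ, 1 ≤ τ → τ ≤ n' - 1 →
      Nat.card {t : ℕ | t < n' ∧ ψ (v ((t + τ) % n')) - ψ (v (t % n')) = b} ≤ 1)
    (s : ℕ → ℕ → F)
    (hs : ∀ i t, s i t = φ (u i (t % n)) + ψ (v (t % n'))) :
    ∀ i < M, ∀ j < M, ∀ τ : ℤ, ¬(i = j ∧ (N : ℤ) ∣ τ) → ∀ l : ℤ,
      Nat.card {t : ℤ | l ≤ t ∧ t < l + n' ∧
        s i ((t % N).toNat) = s j (((t + τ) % N).toNat)} ≤ 1 := by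
  intro i hi j hj τ hτ l
  have hNpos : 0 < N := hN ▸ Nat.mul_pos hn hn'
  have hdn : n ∣ N := hN ▸ Dvd.intro _ rfl
  have hdn' : n' ∣ N := hN ▸ Dvd.intro_left _ rfl
  have toNat_lt : ∀ {m : ℕ}, 0 < m → ∀ t : ℤ, (t % m).toNat < m := by
    intro m hm t
    have := Int.emod_lt_of_pos t (b := (m : ℤ)) (by omega)
    omega
  have dvd_of_toNat : ∀ {m : ℕ}, 0 < m → (τ % m).toNat = 0 → (m : ℤ) ∣ τ := by
    intro m hm h
    have := Int.emod_nonneg τ (b := (m : ℤ)) (by omega)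
    exact Int.dvd_of_emod_eq_zero (by omega)
  -- The constant of property A_u, extended by `c = 0` to the excluded case `i = j`, `n ∣ τ`.
  obtain ⟨c, hc0, hc⟩ : ∃ c : F, (c = 0 → i = j ∧ (τ % n).toNat = 0) ∧
      ∀ t : ℕ, φ (u j ((t + (τ % n).toNat) % n)) - φ (u i (t % n)) = c := by
    by_cases h : j = i ∧ (τ % n).toNat = 0
    · refine ⟨0, fun _ => ⟨h.1.symm, h.2⟩, fun t => ?_⟩
      rw [h.1, h.2, add_zero, sub_self]
    · obtain ⟨c, hc, h'⟩ := hAu j hj i hi _ (toNat_lt hn τ) h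
      exact ⟨c, fun h0 => absurd h0 hc, h'⟩
  have key : ∀ t : ℤ, s i ((t % N).toNat) = s j (((t + τ) % N).toNat) →
      ψ (v (((t % n').toNat + (τ % n').toNat) % n')) - ψ (v ((t % n').toNat % n')) = -c := by
    intro t h
    rw [hs, hs, toNat_emod_mod hNpos hdn, toNat_emod_mod hNpos hdn', toNat_emod_mod hNpos hdn,
      toNat_emod_mod hNpos hdn', toNat_add_emod hn, toNat_add_emod hn'] at h
    have h2 := hc (t % n).toNat
    rw [Nat.mod_eq_of_lt (toNat_lt hn t)] at h2
    rw [Nat.mod_eq_of_lt (toNat_lt hn' t)]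
    linear_combination -h - h2
  suffices hsub : Set.Subsingleton {t : ℤ | l ≤ t ∧ t < l + n' ∧
      s i ((t % N).toNat) = s j (((t + τ) % N).toNat)} by
    have := hsub.coe_sort
    exact Finite.card_le_one_iff_subsingleton.mpr this
  rintro x ⟨hx1, hx2, hx⟩ y ⟨hy1, hy2, hy⟩
  have kx := key x hx
  have ky := key y hy
  by_cases hb : (τ % n').toNat = 0
  · exfalso
    rw [hb, add_zero, sub_self] at kx
    obtain ⟨hij, ha⟩ := hc0 (neg_eq_zero.mp kx.symm)
    refine hτ ⟨hij, ?_⟩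
    rw [hN, Nat.cast_mul]
    exact (Nat.isCoprime_iff_coprime.mpr hcop).mul_dvd (dvd_of_toNat hn ha) (dvd_of_toNat hn' hb)
  · have hcard := hAv (-c) (τ % n').toNat (by omega) (by have := toNat_lt hn' τ; omega)
    have hfin : Finite {t : ℕ | t < n' ∧
        ψ (v ((t + (τ % n').toNat) % n')) - ψ (v (t % n')) = -c} :=
      ((Set.finite_lt_nat n').subset fun t ht => ht.1).to_subtype
    have hss := Finite.card_le_one_iff_subsingleton.mp hcard
    have hres : (x % n').toNat = (y % n').toNat :=
      Set.subsingleton_coe _ |>.mp hss ⟨toNat_lt hn' x, kx⟩ ⟨toNat_lt hn' y, ky⟩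
    have hx0 := Int.emod_nonneg x (b := (n' : ℤ)) (by omega)
    have hy0 := Int.emod_nonneg y (b := (n' : ℤ)) (by omega)
    have hmod : x % n' = y % n' := by omega
    -- Congruent integers at distance less than `n'` are equal.
    have h0 := Int.eq_zero_of_abs_lt_dvd (Int.ModEq.dvd hmod) (abs_lt.mpr ⟨by omega, by omega⟩)
    omega
end

section
/- Let p be an odd prime, m a positive integer, q = p^m, and let k be a proper divisor of m, so that F_{p^k} is a proper subfield of F_q. Let {a_0 = 1, a_1, …, a_{p^{m−k}−1}} be a complete set of representatives of the cosets of the additive subgroup F_{p^k} in F_q, and let σ : {0, 1, …, p^k−1} → F_{p^k} be a bijection with σ(0) = 0. Define sequences U^i = (u^i_t)_{t=0}^{p^k−1} by u^i_t = a_i + σ(t). Then for all i, j ∈ {0, …, p^{m−k}−1}, all τ ∈ {0, …, p^k−1} and all t ∈ {0, …, p^k−1}, excluding the case (i = j and τ = 0), one has u^i_{(t+τ) mod p^k} ≠ u^j_t. Consequently, for the family 𝓤 = {U^0, …, U^{p^{m−k}−1}} and every window length 1 ≤ L ≤ p^k, the maximum partial Hamming correlation satisfies M(𝓤; L) = 0.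 -/
theorem stmt2 (p m k : ℕ) (hp : p.Prime) (hpodd : Odd p) (hm : 0 < m)
    (hk : 0 < k) (hkm : k ∣ m) (hkm' : k ≠ m)
    {F : Type*} [Field F] [Fintype F] (hcard : Fintype.card F = p ^ m)
    -- K is the subfield of F with p^k elements
    (K : Subfield F) (hK : Nat.card K = p ^ k)
    -- a complete set of additive coset representatives of K in F, with a 0 = 1
    (a : ℕ → F) (ha0 : a 0 = 1)
    (ha_cover : ∀ x : F, ∃ i < p ^ (m - k), x - a i ∈ K)
    (ha_distinct : ∀ i < p ^ (m - k), ∀ j < p ^ (m - k), a i - a j ∈ K → i = j)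
    -- σ is a bijection from {0,…,p^k-1} onto K with σ 0 = 0
    (σ : ℕ → F) (hσ0 : σ 0 = 0)
    (hσ_mem : ∀ t < p ^ k, σ t ∈ K)
    (hσ_inj : ∀ t < p ^ k, ∀ t' < p ^ k, σ t = σ t' → t = t')
    (hσ_surj : ∀ y ∈ K, ∃ t < p ^ k, σ t = y) :
    -- the sequences u^i_t = a_i + σ(t) never agree at admissible shifts
    (∀ i < p ^ (m - k), ∀ j < p ^ (m - k), ∀ τ < p ^ k, ∀ t < p ^ k,
        ¬(i = j ∧ τ = 0) → a i + σ ((t + τ) % p ^ k) ≠ a j + σ t) ∧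
    -- consequently the maximum partial Hamming correlation of the family is 0
    (∀ L : ℕ, 1 ≤ L → L ≤ p ^ k →
      ∀ i < p ^ (m - k), ∀ j < p ^ (m - k), ∀ l < p ^ k, ∀ τ < p ^ k,
        ¬(i = j ∧ τ = 0) →
          Hcorr (p ^ k) L l τ (fun t => a i + σ (t % p ^ k))
            (fun t => a j + σ (t % p ^ k)) = 0) := by
  have hN : 0 < p ^ k := pow_pos hp.pos k
  have main : ∀ i < p ^ (m - k), ∀ j < p ^ (m - k), ∀ τ < p ^ k, ∀ t < p ^ k,
      ¬(i = j ∧ τ = 0) → a i + σ ((t + τ) % p ^ k) ≠ a j + σ t := by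
    intro i hi j hj τ hτ t ht hne heq
    have hs : (t + τ) % p ^ k < p ^ k := Nat.mod_lt _ hN
    have hij : i = j := by
      apply ha_distinct i hi j hj
      have hdiff : a i - a j = σ t - σ ((t + τ) % p ^ k) := by
        linear_combination heq
      rw [hdiff]
      exact K.sub_mem (hσ_mem t ht) (hσ_mem _ hs)
    subst hij
    have hmod : (t + τ) % p ^ k = t := hσ_inj _ hs t ht (add_left_cancel heq)
    have hτ0 : τ ≠ 0 := fun h => hne ⟨rfl, h⟩
    rcases lt_or_ge (t + τ) (p ^ k) with h | h
    · rw [Nat.mod_eq_of_lt h] at hmod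
      omega
    · rw [Nat.mod_eq_sub_mod h, Nat.mod_eq_of_lt (by omega)] at hmod
      omega
  refine ⟨main, ?_⟩
  intro L _ _ i hi j hj l _ τ hτ hne
  -- In `Hcorr` the shift sits on the second sequence, so `main` applies with `i` and `j` swapped.
  have hempty : {t : ℕ | l ≤ t ∧ t < l + L ∧
      a i + σ (t % p ^ k % p ^ k) = a j + σ ((t + τ) % p ^ k % p ^ k)} = ∅ := by
    refine Set.eq_empty_iff_forall_notMem.mpr ?_
    rintro t ⟨-, -, h⟩
    rw [Nat.mod_mod, Nat.mod_mod] at h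
    refine main j hj i hi τ hτ (t % p ^ k) (Nat.mod_lt _ hN) (fun h' => hne ⟨h'.1.symm, h'.2⟩) ?_
    rw [Nat.mod_add_mod]
    exact h.symm
  unfold Hcorr
  rw [hempty]
  simp
end

section
/- Let p be an odd prime, m a positive integer, q = p^m, and let k be a proper divisor of m. Let {a_0 = 1, a_1, …, a_{p^{m−k}−1}} be a complete set of representatives of the cosets of the additive subgroup F_{p^k} in F_q, and let σ : {0, 1, …, p^k−1} → F_{p^k} be a bijection with σ(0) = 0 satisfying the additivity condition σ((t+τ) mod p^k) = σ(t) + σ(τ) for all t, τ ∈ {0, …, p^k−1}. Define u^i_t = a_i + σ(t). Let P(x) = x^e + c_{e−1}x^{e−1} + … + c_0 ∈ F_p[x] be a monic polynomial with gcd(P(x), x^m − 1) = 1 in F_p[x], and let φ_P : F_q → F_q be the linearized map φ_P(x) = x^{p^e} + c_{e−1}x^{p^{e−1}} + … + c_0 x. Then for all i, j ∈ {0, …, p^{m−k}−1}, all τ ∈ {0, …, p^k−1}, excluding the case (i = j and τ = 0), and for all t ∈ {0, …, p^k−1}: φ_P(u^i_{(t+τ) mod p^k}) − φ_P(u^j_t)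 = φ_P(a_i − a_j + σ(τ)), and this value is nonzero. -/
/-!
The map `φP` is the endomorphism `P(Φ)` of the `F_p`-vector space `F`, where `Φ` is the Frobenius
`x ↦ x ^ p`. Additivity of `P(Φ)` and of `σ` gives the difference formula. Since `|F| = p ^ m`, the
polynomial `X ^ m - 1` annihilates `Φ`, so a Bézout relation `U * P + V * (X ^ m - 1) = 1` shows
that `U(Φ)` is a left inverse of `P(Φ)`; hence `P(Φ)` is injective. Finally `a i - a j + σ τ = 0`
would put `a i - a j` in `K`, forcing `i = j`, and then `σ τ = 0`, forcing `τ = 0`.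
-/

/-- The Frobenius `x ↦ x ^ p` as an `F_p`-linear endomorphism of `F`. -/
noncomputable def frobEnd (p : ℕ) [Fact p.Prime] (F : Type*) [Field F] [Algebra (ZMod p) F] :
    Module.End (ZMod p) F :=
  (FiniteField.frobeniusAlgHom (ZMod p) F).toLinearMap

lemma frobEnd_pow_apply (p : ℕ) [Fact p.Prime] {F : Type*} [Field F] [Algebra (ZMod p) F]
    (n : ℕ) (x : F) : (frobEnd p F ^ n) x = x ^ p ^ n := by
  induction n with
  | zero => simp
  | succ n ih =>
    rw [pow_succ', Module.End.mul_apply, ih]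
    simp [frobEnd, ZMod.card, ← pow_mul, ← pow_succ]

lemma aeval_frobEnd_apply (p : ℕ) [Fact p.Prime] {F : Type*} [Field F] [Algebra (ZMod p) F]
    (P : Polynomial (ZMod p)) (x : F) :
    Polynomial.aeval (frobEnd p F) P x
      = ∑ i ∈ Finset.range (P.natDegree + 1), P.coeff i • x ^ p ^ i := by
  rw [Polynomial.aeval_eq_sum_range, LinearMap.sum_apply]
  simp [frobEnd_pow_apply]

/-- A polynomial coprime to `X ^ m - 1`, which annihilates Frobenius, is invertible at Frobenius. -/
lemma aeval_frobEnd_injective (p m : ℕ) [Fact p.Prime] {F : Type*} [Field F] [Fintype F]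
    [Algebra (ZMod p) F] (hcard : Fintype.card F = p ^ m) (P : Polynomial (ZMod p))
    (hP : IsCoprime P (Polynomial.X ^ m - 1)) :
    Function.Injective (Polynomial.aeval (frobEnd p F) P) := by
  obtain ⟨U, V, h⟩ := hP
  have hann : Polynomial.aeval (frobEnd p F) (Polynomial.X ^ m - 1 : Polynomial (ZMod p)) = 0 := by
    ext x
    simp [frobEnd_pow_apply, ← hcard, FiniteField.pow_card]
  have hinv : Polynomial.aeval (frobEnd p F) U * Polynomial.aeval (frobEnd p F) P = 1 := by
    have := congrArg (Polynomial.aeval (frobEnd p F)) h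
    rwa [map_add, map_mul, map_mul, hann, mul_zero, add_zero, map_one] at this
  exact Function.LeftInverse.injective (g := Polynomial.aeval (frobEnd p F) U)
    fun x => LinearMap.congr_fun hinv x

theorem stmt3 (p m k : ℕ) (hp : p.Prime) (hpodd : Odd p) (hm : 0 < m)
    (hk : 0 < k) (hkm : k ∣ m) (hkm' : k ≠ m)
    {F : Type*} [Field F] [Fintype F] [Algebra (ZMod p) F]
    (hcard : Fintype.card F = p ^ m)
    -- K is the subfield of F with p^k elements
    (K : Subfield F) (hK : Nat.card K = p ^ k)
    -- a complete set of additive coset representatives of K in F, with a 0 = 1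
    (a : ℕ → F) (ha0 : a 0 = 1)
    (ha_cover : ∀ x : F, ∃ i < p ^ (m - k), x - a i ∈ K)
    (ha_distinct : ∀ i < p ^ (m - k), ∀ j < p ^ (m - k), a i - a j ∈ K → i = j)
    -- σ is an "additive" bijection from {0,…,p^k-1} onto K with σ 0 = 0
    (σ : ℕ → F) (hσ0 : σ 0 = 0)
    (hσ_mem : ∀ t < p ^ k, σ t ∈ K)
    (hσ_inj : ∀ t < p ^ k, ∀ t' < p ^ k, σ t = σ t' → t = t')
    (hσ_surj : ∀ y ∈ K, ∃ t < p ^ k, σ t = y)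
    (hσ_add : ∀ t < p ^ k, ∀ τ < p ^ k, σ ((t + τ) % p ^ k) = σ t + σ τ)
    -- P is a monic polynomial over F_p of degree e, coprime to x^m - 1
    (P : Polynomial (ZMod p)) (e : ℕ) (hPmonic : P.Monic) (he : P.natDegree = e)
    (hPcop : IsCoprime P (Polynomial.X ^ m - 1))
    -- φP is the associated linearized map
    (φP : F → F)
    (hφP : ∀ x : F, φP x = ∑ i ∈ Finset.range (e + 1), P.coeff i • x ^ p ^ i) :
    ∀ i < p ^ (m - k), ∀ j < p ^ (m - k), ∀ τ < p ^ k, ¬(i = j ∧ τ = 0) →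
      (∀ t < p ^ k,
        φP (a i + σ ((t + τ) % p ^ k)) - φP (a j + σ t) = φP (a i - a j + σ τ)) ∧
      φP (a i - a j + σ τ) ≠ 0 := by
  haveI : Fact p.Prime := ⟨hp⟩
  obtain rfl : φP = Polynomial.aeval (frobEnd p F) P := by
    funext x
    rw [hφP, aeval_frobEnd_apply, he]
  intro i hi j hj τ hτ hne
  refine ⟨fun t ht => ?_, fun h0 => hne ?_⟩
  · rw [hσ_add t ht τ hτ, ← map_sub]
    congr 1
    ring
  · have hz : a i - a j + σ τ = 0 :=
      aeval_frobEnd_injective p m hcard P hPcop (h0.trans (map_zero _).symm)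
    have hij : i = j := ha_distinct i hi j hj <| by
      rw [eq_neg_of_add_eq_zero_left hz]
      exact K.neg_mem (hσ_mem τ hτ)
    subst hij
    refine ⟨rfl, hσ_inj τ hτ 0 (pow_pos hp.pos k) ?_⟩
    rwa [sub_self, zero_add, ← hσ0] at hz
end

section
/- Let q be a prime power, α a primitive element of F_q (a generator of the multiplicative group F_q^*), and d a positive integer with gcd(d, q−1) = 1. Then for every b ∈ F_q and every τ with 1 ≤ τ ≤ q−2, the number of t ∈ {0, …, q−2} such that (α^{(t+τ) mod (q−1)})^d − (α^t)^d = b is at most 1. -/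
/-!
Since `α` has order `q - 1` and `d` is coprime to `q - 1`, the power `α ^ d` also has order
`q - 1`. The difference equals `(α ^ d) ^ t * ((α ^ d) ^ τ - 1)`, whose second factor is nonzero
because `0 < τ < q - 1`; hence its value determines `(α ^ d) ^ t`, and so `t < q - 1`.
-/

theorem orderOf_eq_of_primitive {F : Type*} [Field F] [Fintype F]
    (α : F) (hα0 : α ≠ 0) (hα : ∀ x : F, x ≠ 0 → ∃ s : ℕ, α ^ s = x) :
    orderOf α = Fintype.card F - 1 := by
  have h : orderOf (Units.mk0 α hα0) = Nat.card Fˣ := by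
    apply orderOf_eq_card_of_forall_mem_zpowers
    intro x
    obtain ⟨s, hs⟩ := hα x x.ne_zero
    exact ⟨s, by ext; simpa using hs⟩
  rw [← orderOf_units, Units.val_mk0, Nat.card_units, Nat.card_eq_fintype_card] at h
  exact h

theorem stmt5 {F : Type*} [Field F] [Fintype F] (q : ℕ) (hq : Fintype.card F = q)
    -- α is a primitive element of F (a generator of F^*)
    (α : F) (hα0 : α ≠ 0) (hα : ∀ x : F, x ≠ 0 → ∃ s : ℕ, α ^ s = x)
    (d : ℕ) (hd : 0 < d) (hdq : Nat.Coprime d (q - 1)) :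
    ∀ b : F, ∀ τ : ℕ, 1 ≤ τ → τ ≤ q - 2 →
      Nat.card {t : ℕ | t < q - 1 ∧
        (α ^ ((t + τ) % (q - 1))) ^ d - (α ^ t) ^ d = b} ≤ 1 := by
  intro b τ hτ1 hτ2
  have hord : orderOf α = q - 1 := hq ▸ orderOf_eq_of_primitive α hα0 hα
  have hordd : orderOf (α ^ d) = q - 1 := by
    rw [Nat.Coprime.orderOf_pow (by rw [hord]; exact hdq.symm), hord]
  have hfactor : ∀ t : ℕ, (α ^ ((t + τ) % (q - 1))) ^ d - (α ^ t) ^ d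
      = (α ^ d) ^ t * ((α ^ d) ^ τ - 1) := by
    intro t
    rw [← hord, pow_mod_orderOf]
    ring
  have hne : (α ^ d) ^ τ - 1 ≠ 0 := by
    rw [sub_ne_zero]
    exact pow_ne_one_of_lt_orderOf (by omega) (by omega)
  have hfin : Finite {t : ℕ | t < q - 1 ∧
      (α ^ ((t + τ) % (q - 1))) ^ d - (α ^ t) ^ d = b} :=
    ((Set.finite_Iio (q - 1)).subset fun _ h => h.1).to_subtype
  rw [Finite.card_le_one_iff_subsingleton, Set.subsingleton_coe]
  rintro s ⟨hs, hsb⟩ t ⟨ht, htb⟩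
  rw [hfactor] at hsb htb
  exact pow_injOn_Iio_orderOf (by simpa [hordd] using hs) (by simpa [hordd] using ht)
    (mul_right_cancel₀ hne (hsb.trans htb.symm))
end

section
/- Let p be an odd prime, m a positive integer, q = p^m, and let k be a proper divisor of m. Let {a_0 = 1, a_1, …, a_{p^{m−k}−1}} be a complete set of representatives of the cosets of the additive subgroup F_{p^k} in F_q, and let σ : {0, 1, …, p^k−1} → F_{p^k} be a bijection with σ(0) = 0 satisfying σ((t+τ) mod p^k) = σ(t) + σ(τ) for all t, τ ∈ {0, …, p^k−1}. Let P(x) ∈ F_p[x] be monic of degree e with gcd(P(x), x^m − 1) = 1 in F_p[x] and φ_P(x) = x^{p^e} + c_{e−1}x^{p^{e−1}} + … + c_0 x the associated linearized map. Let α be a primitive element of F_q and d a positive integer with gcd(d, q−1) = 1. Set N = p^k(p^m − 1) and define p^{m−k} sequences S^i = (s^i_t)_{t=0}^{N−1}, 0 ≤ i ≤ p^{m−k}−1, by s^i_t = φ_P(a_i + σ(t mod p^k)) + (α^{t mod (q−1)})^d. Then 𝓢 = {S^0, …, S^{p^{m−k}−1}} is a family of p^{m−k} sequences of length N over F_q,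 and for every window length L with 1 ≤ L ≤ N, the maximum partial Hamming correlation satisfies M(𝓢; L) = ⌈L/(p^m − 1)⌉. -/
open Polynomial in
/-- The linearized map of `P` is additive, and injective when `P` is coprime to `X ^ m - 1`. -/
theorem linearized_map_injective (p m : ℕ) (hp : p.Prime)
    {F : Type*} [Field F] [Fintype F] [Algebra (ZMod p) F]
    (hcard : Fintype.card F = p ^ m) (P : (ZMod p)[X]) (hPcop : IsCoprime P (X ^ m - 1))
    (φP : F → F)
    (hφP : ∀ x : F, φP x = ∑ i ∈ Finset.range (P.natDegree + 1), P.coeff i • x ^ p ^ i) :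
    (∀ x y, φP (x - y) = φP x - φP y) ∧ ∀ x, φP x = 0 → x = 0 := by
  have : Fact p.Prime := ⟨hp⟩
  let f : F →ₗ[ZMod p] F := (FiniteField.frobeniusAlgHom (ZMod p) F).toLinearMap
  have hf1 : ∀ x, f x = x ^ p := fun x => by
    simp [f, ZMod.card]
  have hf : ∀ i x, (f ^ i) x = x ^ p ^ i := by
    intro i
    induction i with
    | zero => intro x; simp
    | succ i ih =>
      intro x
      rw [pow_succ, Module.End.mul_apply, hf1, ih, ← pow_mul, pow_succ']
  have hφ : ∀ x, φP x = aeval f P x := by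
    intro x
    rw [hφP, aeval_eq_sum_range, LinearMap.sum_apply]
    exact Finset.sum_congr rfl fun i _ => by rw [LinearMap.smul_apply, hf]
  have hfm : f ^ m = 1 := by
    ext x
    rw [hf, ← hcard, FiniteField.pow_card]
    rfl
  refine ⟨fun x y => by simp only [hφ, map_sub], fun x hx => ?_⟩
  obtain ⟨u, v, huv⟩ := hPcop
  have h := congrArg (fun g => aeval f g x) huv
  rw [hφ] at hx
  simpa [hfm, hx] using h.symm

/-- Times lying in one residue class modulo `n` occur at most `⌈L / n⌉` times in a window of
length `L`. -/
theorem window_card_le (n L l : ℕ) (hn : 0 < n) (Q : ℕ → Prop)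
    (hQ : ∀ t t', Q t → Q t' → t ≡ t' [MOD n]) :
    Nat.card {t : ℕ | l ≤ t ∧ t < l + L ∧ Q t} ≤ (L + n - 1) / n := by
  have key : ∀ t ∈ {t : ℕ | l ≤ t ∧ t < l + L ∧ Q t},
      (t - l) / n ∈ (↑(Finset.range ((L + n - 1) / n)) : Set ℕ) := by
    rintro t ⟨h1, h2, -⟩
    simp only [Finset.coe_range, Set.mem_Iio]
    have : (t - l) / n + 1 ≤ (L + n - 1) / n := by
      rw [← Nat.add_div_right _ hn]
      exact Nat.div_le_div_right (by omega)
    omega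
  have := Set.ncard_le_ncard_of_injOn (fun t => (t - l) / n) key (by
    rintro t ⟨h1, h2, h3⟩ t' ⟨h1', h2', h3'⟩ h
    have hmod : t - l ≡ t' - l [MOD n] := by
      apply Nat.ModEq.add_right_cancel' l
      rw [Nat.sub_add_cancel h1, Nat.sub_add_cancel h1']
      exact hQ t t' h3 h3'
    have h4 := Nat.div_add_mod (t - l) n
    have h5 := Nat.div_add_mod (t' - l) n
    simp only at h
    rw [h, hmod] at h4
    omega) (Finset.finite_toSet _)
  rwa [Set.ncard_coe_finset, Finset.card_range] at this

/-- A window of length `L` starting inside a residue class modulo `n` meets that class at least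
`⌈L / n⌉` times. -/
theorem le_window_card (n L l : ℕ) (hn : 0 < n) (Q : ℕ → Prop)
    (hQ : ∀ j, Q (l + j * n)) :
    (L + n - 1) / n ≤ Nat.card {t : ℕ | l ≤ t ∧ t < l + L ∧ Q t} := by
  have hfin : {t : ℕ | l ≤ t ∧ t < l + L ∧ Q t}.Finite :=
    (Set.finite_Ico l (l + L)).subset fun t ht => ⟨ht.1, ht.2.1⟩
  have := Set.ncard_le_ncard_of_injOn (s := (↑(Finset.range ((L + n - 1) / n)) : Set ℕ))
    (t := {t : ℕ | l ≤ t ∧ t < l + L ∧ Q t}) (fun j => l + j * n) (by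
      intro j hj
      simp only [Finset.coe_range, Set.mem_Iio] at hj
      refine ⟨by omega, ?_, hQ j⟩
      have h1 : (j + 1) * n ≤ L + n - 1 := (Nat.le_div_iff_mul_le hn).1 hj
      rw [add_mul] at h1
      omega) (by
      intro j _ j' _ h
      exact Nat.eq_of_mul_eq_mul_right hn (Nat.add_left_cancel h)) hfin
  rwa [Set.ncard_coe_finset, Finset.card_range] at this

theorem stmt6 (p m k : ℕ) (hp : p.Prime) (hpodd : Odd p) (hm : 0 < m)
    (hk : 0 < k) (hkm : k ∣ m) (hkm' : k ≠ m)
    {F : Type*} [Field F] [Fintype F] [Algebra (ZMod p) F]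
    (hcard : Fintype.card F = p ^ m)
    -- K is the subfield of F with p^k elements
    (K : Subfield F) (hK : Nat.card K = p ^ k)
    -- a complete set of additive coset representatives of K in F, with a 0 = 1
    (a : ℕ → F) (ha0 : a 0 = 1)
    (ha_cover : ∀ x : F, ∃ i < p ^ (m - k), x - a i ∈ K)
    (ha_distinct : ∀ i < p ^ (m - k), ∀ j < p ^ (m - k), a i - a j ∈ K → i = j)
    -- σ is an "additive" bijection from {0,…,p^k-1} onto K with σ 0 = 0
    (σ : ℕ → F) (hσ0 : σ 0 = 0)
    (hσ_mem : ∀ t < p ^ k, σ t ∈ K)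
    (hσ_inj : ∀ t < p ^ k, ∀ t' < p ^ k, σ t = σ t' → t = t')
    (hσ_surj : ∀ y ∈ K, ∃ t < p ^ k, σ t = y)
    (hσ_add : ∀ t < p ^ k, ∀ τ < p ^ k, σ ((t + τ) % p ^ k) = σ t + σ τ)
    -- P is a monic polynomial over F_p of degree e, coprime to x^m - 1
    (P : Polynomial (ZMod p)) (e : ℕ) (hPmonic : P.Monic) (he : P.natDegree = e)
    (hPcop : IsCoprime P (Polynomial.X ^ m - 1))
    -- φP is the associated linearized map
    (φP : F → F)
    (hφP : ∀ x : F, φP x = ∑ i ∈ Finset.range (e + 1), P.coeff i • x ^ p ^ i)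
    -- α is a primitive element of F, and d is coprime to p^m - 1
    (α : F) (hα0 : α ≠ 0) (hα : ∀ x : F, x ≠ 0 → ∃ s : ℕ, α ^ s = x)
    (d : ℕ) (hd : 0 < d) (hdq : Nat.Coprime d (p ^ m - 1))
    -- the family of sequences
    (N : ℕ) (hN : N = p ^ k * (p ^ m - 1))
    (s : ℕ → ℕ → F)
    (hs : ∀ i t, s i t = φP (a i + σ (t % p ^ k)) + (α ^ (t % (p ^ m - 1))) ^ d) :
    -- the p^(m-k) sequences of length N are pairwise distinct
    (∀ i < p ^ (m - k), ∀ j < p ^ (m - k), (∀ t < N, s i t = s j t) → i = j) ∧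
    -- and the maximum partial Hamming correlation equals ⌈L/(p^m-1)⌉
    (∀ L : ℕ, 1 ≤ L → L ≤ N →
      (∀ i < p ^ (m - k), ∀ j < p ^ (m - k), ∀ l < N, ∀ τ < N, ¬(i = j ∧ τ = 0) →
        Hcorr N L l τ (s i) (s j) ≤ (L + (p ^ m - 1) - 1) / (p ^ m - 1)) ∧
      (∃ i < p ^ (m - k), ∃ j < p ^ (m - k), ∃ l < N, ∃ τ < N, ¬(i = j ∧ τ = 0) ∧
        Hcorr N L l τ (s i) (s j) = (L + (p ^ m - 1) - 1) / (p ^ m - 1))) := by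
  subst he
  obtain ⟨hφsub, hφinj⟩ := linearized_map_injective p m hp hcard P hPcop φP hφP
  have hp3 : 3 ≤ p := by
    have := hp.two_le
    rcases hpodd with ⟨r, hr⟩
    omega
  have hpm : 3 ≤ p ^ m := hp3.trans (Nat.le_self_pow hm.ne' p)
  have hpk : 3 ≤ p ^ k := hp3.trans (Nat.le_self_pow hk.ne' p)
  have hcop : Nat.Coprime (p ^ k) (p ^ m - 1) := by
    apply Nat.Coprime.pow_left
    rw [hp.coprime_iff_not_dvd]
    intro h
    have h1 : p ∣ p ^ m := dvd_pow_self p hm.ne'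
    have h2 : p ∣ 1 := by
      have := Nat.dvd_sub h1 h
      rwa [Nat.sub_sub_self (by omega)] at this
    exact hp.one_lt.ne' (Nat.dvd_one.1 h2)
  have hαord : orderOf α = p ^ m - 1 := by
    classical
    have h1 : ∀ x : Fˣ, x ∈ Subgroup.zpowers (Units.mk0 α hα0) := by
      intro x
      obtain ⟨r, hr⟩ := hα x x.ne_zero
      exact ⟨r, by ext; simpa using hr⟩
    have h2 := orderOf_eq_card_of_forall_mem_zpowers h1
    rw [Nat.card_eq_fintype_card, Fintype.card_units, hcard] at h2
    rw [← h2, ← orderOf_units, Units.val_mk0]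
  generalize hn : p ^ m - 1 = n at *
  have hn2 : 2 ≤ n := by omega
  have hn0 : 0 < n := by omega
  have hβ0 : α ^ d ≠ 0 := pow_ne_zero _ hα0
  have hβord : orderOf (α ^ d) = n := by
    rw [← hαord]
    exact Nat.Coprime.orderOf_pow (by rw [hαord]; exact hdq.symm)
  -- `α ^ d` is primitive: `d` is invertible modulo the order of `α`.
  have hβgen : ∀ x : F, x ≠ 0 → ∃ r : ℕ, (α ^ d) ^ r = x := by
    intro x hx
    obtain ⟨r, hr⟩ := hα x hx
    obtain ⟨c, hc⟩ := exists_pow_eq_self_of_coprime (x := α) (n := d) (by rw [hαord]; exact hdq)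
    exact ⟨c * r, by rw [pow_mul, hc, hr]⟩
  generalize hβ : α ^ d = β at *
  have hσadd' : ∀ t τ, σ ((t + τ) % p ^ k) = σ (t % p ^ k) + σ (τ % p ^ k) := by
    intro t τ
    rw [Nat.add_mod, hσ_add _ (Nat.mod_lt _ (by omega)) _ (Nat.mod_lt _ (by omega))]
  have hs' : ∀ i t, s i (t % N) = φP (a i + σ (t % p ^ k)) + β ^ t := by
    intro i t
    rw [hs, hN, Nat.mod_mul_right_mod, Nat.mod_mul_left_mod, ← pow_mul, mul_comm, pow_mul, hβ,
      ← hβord, pow_mod_orderOf]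
  have hmatch : ∀ i j t τ, s i (t % N) = s j ((t + τ) % N) ↔
      φP (a i - a j - σ (τ % p ^ k)) = β ^ t * (β ^ τ - 1) := by
    intro i j t τ
    have h : a i - a j - σ (τ % p ^ k) =
        (a i + σ (t % p ^ k)) - (a j + (σ (t % p ^ k) + σ (τ % p ^ k))) := by ring
    rw [hs', hs', hσadd', h, hφsub, pow_add]
    constructor <;> intro h <;> linear_combination h
  have hzero : ∀ i < p ^ (m - k), ∀ j < p ^ (m - k), ∀ τ < N,
      φP (a i - a j - σ (τ % p ^ k)) = 0 → β ^ τ - 1 = 0 → i = j ∧ τ = 0 := by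
    intro i hi j hj τ hτ h1 h2
    have hlt : τ % p ^ k < p ^ k := Nat.mod_lt _ (by omega)
    have h3 := sub_eq_zero.1 (hφinj _ h1)
    have hij : i = j := ha_distinct i hi j hj (h3 ▸ hσ_mem _ hlt)
    subst hij
    rw [sub_self, ← hσ0] at h3
    have h4 := hσ_inj _ (by omega) _ hlt h3
    have h5 : n ∣ τ := hβord ▸ orderOf_dvd_of_pow_eq_one (sub_eq_zero.1 h2)
    have h6 : N ∣ τ := hN ▸ hcop.mul_dvd_of_dvd_of_dvd (Nat.dvd_of_mod_eq_zero h4.symm) h5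
    exact ⟨rfl, Nat.eq_zero_of_dvd_of_lt h6 hτ⟩
  have hNn : n < N := by rw [hN]; nlinarith
  have hmod : ∀ i < p ^ (m - k), ∀ j < p ^ (m - k), ∀ τ < N, ¬(i = j ∧ τ = 0) →
      ∀ t t', s i (t % N) = s j ((t + τ) % N) → s i (t' % N) = s j ((t' + τ) % N) →
        t ≡ t' [MOD n] := by
    intro i hi j hj τ hτ hne t t' h h'
    rw [hmatch] at h h'
    by_cases hb : β ^ τ - 1 = 0
    · exact absurd (hzero i hi j hj τ hτ (by rw [h, hb, mul_zero]) hb) hne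
    · have h1 := mul_right_cancel₀ hb (h.symm.trans h')
      have h2 : Units.mk0 β hβ0 ^ t = Units.mk0 β hβ0 ^ t' := by ext; simpa using h1
      have h3 := pow_inj_mod.1 h2
      rwa [← orderOf_units, Units.val_mk0, hβord] at h3
  refine ⟨?_, fun L hL hLN => ⟨?_, ?_⟩⟩
  · intro i hi j hj h
    have h0 := h 0 (by omega)
    rw [hs, hs, add_left_inj] at h0
    have h1 := hφinj (a i - a j) (by
      have := hφsub (a i + σ (0 % p ^ k)) (a j + σ (0 % p ^ k))
      rwa [h0, sub_self, add_sub_add_right_eq_sub] at this)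
    exact ha_distinct i hi j hj (h1 ▸ K.zero_mem)
  · intro i hi j hj l hl τ hτ hne
    exact window_card_le n L l hn0 _ (hmod i hi j hj τ hτ hne)
  · have h0 : 0 < p ^ (m - k) := pow_pos hp.pos _
    have hne : ¬((0 : ℕ) = 0 ∧ (1 : ℕ) = 0) := by omega
    have hb : β ^ 1 - 1 ≠ 0 := by
      intro h
      have : orderOf β = 1 := orderOf_eq_one_iff.2 (by simpa [sub_eq_zero] using h)
      omega
    have hc : φP (a 0 - a 0 - σ (1 % p ^ k)) ≠ 0 := by
      intro h
      have h1 := hφinj _ h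
      rw [sub_self, zero_sub, neg_eq_zero, Nat.mod_eq_of_lt (by omega), ← hσ0] at h1
      have := hσ_inj 1 (by omega) 0 (by omega) h1
      omega
    obtain ⟨r, hr⟩ := hβgen _ (div_ne_zero hc hb)
    have hl : ∀ j, s 0 ((r % n + j * n) % N) = s 0 ((r % n + j * n + 1) % N) := by
      intro j
      have : β ^ (r % n + j * n) = β ^ r := by
        rw [pow_add, mul_comm j n, pow_mul, ← hβord, pow_orderOf_eq_one, one_pow, mul_one,
          pow_mod_orderOf]
      rw [hmatch, this, hr, div_mul_cancel₀ _ hb]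
    have hlt := Nat.mod_lt r hn0
    refine ⟨0, h0, 0, h0, r % n, by omega, 1, by omega, hne, le_antisymm ?_ ?_⟩
    · exact window_card_le n L _ hn0 _ (hmod 0 h0 0 h0 1 (by omega) hne)
    · exact le_window_card n L _ hn0 _ hl
end

section
/- Let p be an odd prime, q = p^m, α a primitive element of F_q, and T = (q−1)/(p−1). Let w = (a_0, …, a_{k−1}) ∈ F_q^k be a nonzero vector with R(w) = m − 1. Let r be a positive divisor of p − 1 with gcd(r, m) = 1, set n' = (q−1)/r, let d be an integer with gcd(d, q−1) = 1, and let ψ be an F_p-linear bijection of F_q. Define s^i_t = 𝒯(ψ(α^{d(i+rt)})) for 0 ≤ i ≤ r−1 and integers t (indices read modulo n'). Fix i, j ∈ {0, …, r−1} and τ ∈ {0, …, n'−1}, excluding the case (i = j and τ = 0). Then the set A = {t ∈ {0, …, n'−1} : s^i_t = s^j_{(t+τ) mod n'}} is either empty, or there exists t_0 ∈ {0, …, n'−1} such that A = {t ∈ {0, …, n'−1} : t ≡ t_0 (mod T)}. -/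
/-!
Write `q = p ^ m`. Since the trace form is nondegenerate and `R(w) = m - 1`, the map `𝒯` has
a one-dimensional kernel (`trace_kernel_line`), and so has `𝒯 ∘ ψ`. Since `α ^ (d r n') = 1`, the
reduction modulo `n'` is harmless, and `s i t = s j (t + τ)` says that
`α ^ (d r t) * C` lies in that kernel, where `C = α ^ (d i) - α ^ (d (j + r τ))`. The excluded case
is exactly the one where `C = 0`, because `d` is prime to `q - 1` and `i`, `j + r τ` are
both `< q - 1`. Hence, given one solution `t₀`, the number `t` is a solution iff
`α ^ (d r (t - t₀)) ∈ F_p`, that is, iff its `(p - 1)`-st power is `1`, that is, iff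
`T ∣ d r (t - t₀)`. Finally `d` is prime to `T`, and so is `r`, because
`T = 1 + p + ⋯ + p ^ (m - 1) ≡ m` modulo `r` (`coprime_geom`).
-/

/-- `𝒯` composed with a linear bijection has kernel of dimension one: any element of the kernel is
a scalar multiple of any given nonzero one. -/
lemma trace_kernel_line {p m k : ℕ} [Fact p.Prime]
    {F : Type*} [Field F] [Fintype F] [Algebra (ZMod p) F]
    (hcard : Fintype.card F = p ^ m) (w : Fin k → F) (hw : w ≠ 0)
    (hR : Module.finrank (ZMod p) (Submodule.span (ZMod p) (Set.range w)) = m - 1)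
    (ψ : F → F) (hψlin : IsLinearMap (ZMod p) ψ) (hψinj : Function.Injective ψ)
    {x y : F} (hx0 : x ≠ 0)
    (hx : ∀ l, Algebra.trace (ZMod p) F (w l * ψ x) = 0)
    (hy : ∀ l, Algebra.trace (ZMod p) F (w l * ψ y) = 0) :
    ∃ c : ZMod p, y = c • x := by
  have hfin : Module.finrank (ZMod p) F = m := by
    have h := Module.card_eq_pow_finrank (K := ZMod p) (V := F)
    rw [hcard, ZMod.card] at h
    exact (Nat.pow_right_injective (Fact.out : p.Prime).two_le h).symm
  set W := Submodule.span (ZMod p) (Set.range w) with hW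
  have hWpos : 0 < Module.finrank (ZMod p) W := by
    rw [Module.finrank_pos_iff_exists_ne_zero]
    obtain ⟨l, hl⟩ := Function.ne_iff.mp hw
    exact ⟨⟨w l, Submodule.subset_span ⟨l, rfl⟩⟩, fun h => hl (congrArg Subtype.val h)⟩
  set N := (Algebra.traceForm (ZMod p) F).orthogonal W with hN
  have hN1 : Module.finrank (ZMod p) N = 1 := by
    rw [hN, LinearMap.BilinForm.finrank_orthogonal (traceForm_nondegenerate (ZMod p) F),
      hfin, hR]
    omega
  have mem : ∀ z : F, (∀ l, Algebra.trace (ZMod p) F (w l * z) = 0) → z ∈ N := by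
    intro z hz
    rw [hN, LinearMap.BilinForm.mem_orthogonal_iff]
    intro v hv
    rw [Algebra.traceForm_apply]
    induction hv using Submodule.span_induction with
    | mem v hv => obtain ⟨l, rfl⟩ := hv; exact hz l
    | zero => simp
    | add a b _ _ ha hb => rw [add_mul, map_add, ha, hb, add_zero]
    | smul c a _ ha => rw [smul_mul_assoc, map_smul, ha, smul_zero]
  have hne : (⟨ψ x, mem _ hx⟩ : N) ≠ 0 := by
    intro h
    have h' : ψ x = 0 := congrArg Subtype.val h
    exact hx0 (hψinj (h'.trans hψlin.map_zero.symm))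
  obtain ⟨c, hc⟩ := (finrank_eq_one_iff_of_nonzero' _ hne).mp hN1 ⟨ψ y, mem _ hy⟩
  refine ⟨c, hψinj ?_⟩
  rw [hψlin.map_smul]
  exact (congrArg Subtype.val hc).symm

lemma zpow_primitive_eq_one_iff {F : Type*} [Field F] [Fintype F]
    {α : F} (hα0 : α ≠ 0) (hα : ∀ x : F, x ≠ 0 → ∃ s : ℕ, α ^ s = x) (z : ℤ) :
    α ^ z = 1 ↔ ((Fintype.card F - 1 : ℕ) : ℤ) ∣ z := by
  have hord : orderOf (Units.mk0 α hα0) = Fintype.card F - 1 := by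
    rw [orderOf_eq_card_of_forall_mem_zpowers, Nat.card_units, Nat.card_eq_fintype_card]
    intro u
    obtain ⟨s, hs⟩ := hα u u.ne_zero
    exact ⟨s, by ext; simpa using hs⟩
  rw [← hord, orderOf_dvd_iff_zpow_eq_one, Units.ext_iff]
  simp

/-- The nonzero elements of the prime field are the `(p - 1)`-st roots of unity. -/
lemma mem_prime_field_iff {p : ℕ} [Fact p.Prime] {F : Type*} [Field F] [Algebra (ZMod p) F]
    {z : F} (hz : z ≠ 0) : (∃ c : ZMod p, z = algebraMap (ZMod p) F c) ↔ z ^ (p - 1) = 1 := by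
  have hp : p.Prime := Fact.out
  constructor
  · rintro ⟨c, rfl⟩
    have hc : c ≠ 0 := by rintro rfl; simp at hz
    rw [← map_pow, ZMod.pow_card_sub_one_eq_one hc, map_one]
  · intro h
    have : CharP F p := charP_of_injective_algebraMap (algebraMap (ZMod p) F).injective p
    have h1 : z ^ p = z := by
      rw [← Nat.sub_add_cancel hp.one_le, pow_succ, h, one_mul]
    have h2 := (Subfield.mem_bot_iff_pow_eq_self (F := F) (p := p)).mpr h1
    obtain ⟨n, hn⟩ := (_root_.mem_bot_iff_intCast p F).mp h2
    exact ⟨n, by simp [hn]⟩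

lemma coprime_geom {p m r : ℕ} (hp : p.Prime) (hrp : r ∣ p - 1) (hrm : Nat.Coprime r m) :
    Nat.Coprime r ((p ^ m - 1) / (p - 1)) := by
  rw [← Nat.geomSum_eq hp.two_le]
  have h1 : p ≡ 1 [MOD r] := ((Nat.modEq_iff_dvd' hp.one_le).mpr hrp).symm
  have h2 : ∑ k ∈ Finset.range m, p ^ k ≡ m [MOD r] := by
    rw [← ZMod.natCast_eq_natCast_iff] at h1 ⊢
    push_cast at h1 ⊢
    simp [h1]
  rw [Nat.coprime_comm]
  exact (h2.gcd_eq).trans hrm.symm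

theorem stmt12 (p m k : ℕ) (hp : p.Prime) (hpodd : Odd p) (hm : 0 < m)
    (hk : 0 < k)
    {F : Type*} [Field F] [Fintype F] [Algebra (ZMod p) F]
    (hcard : Fintype.card F = p ^ m)
    -- α is a primitive element of F
    (α : F) (hα0 : α ≠ 0) (hα : ∀ x : F, x ≠ 0 → ∃ s : ℕ, α ^ s = x)
    (T : ℕ) (hT : T = (p ^ m - 1) / (p - 1))
    (w : Fin k → F) (hw : w ≠ 0)
    (hR : Module.finrank (ZMod p) (Submodule.span (ZMod p) (Set.range w)) = m - 1)
    (r : ℕ) (hr : 0 < r) (hrp : r ∣ p - 1) (hrm : Nat.Coprime r m)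
    (n' : ℕ) (hn' : n' = (p ^ m - 1) / r)
    (d : ℤ) (hd : Int.gcd d ((p : ℤ) ^ m - 1) = 1)
    -- ψ is an F_p-linear bijection of F
    (ψ : F → F) (hψlin : IsLinearMap (ZMod p) ψ) (hψbij : Function.Bijective ψ)
    -- the sequences s^i_t = 𝒯(ψ(α^{d(i+rt)}))
    (s : ℕ → ℕ → (Fin k → ZMod p))
    (hs : ∀ (i t : ℕ) (idx : Fin k),
      s i t idx = Algebra.trace (ZMod p) F (w idx * ψ (α ^ (d * ((i : ℤ) + r * t)))))
    (i j τ : ℕ) (hi : i < r) (hj : j < r) (hτ : τ < n') (hij : ¬(i = j ∧ τ = 0)) :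
    {t : ℕ | t < n' ∧ s i t = s j ((t + τ) % n')} = ∅ ∨
    ∃ t₀ < n', {t : ℕ | t < n' ∧ s i t = s j ((t + τ) % n')} =
      {t : ℕ | t < n' ∧ t % T = t₀ % T} := by
  have : Fact p.Prime := ⟨hp⟩
  have hp1 : 0 < p - 1 := by have := hp.two_le; omega
  have hQT : p ^ m - 1 = T * (p - 1) := by
    rw [hT, Nat.div_mul_cancel]
    simpa using Nat.sub_dvd_pow_sub_pow p 1 m
  have hQn : p ^ m - 1 = r * n' := by
    rw [hn', Nat.mul_div_cancel']
    exact hrp.trans ⟨T, by rw [hQT, mul_comm]⟩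
  have hcast : ((p ^ m - 1 : ℕ) : ℤ) = (p : ℤ) ^ m - 1 := by
    rw [Nat.cast_sub (Nat.one_le_pow _ _ hp.pos)]; push_cast; rfl
  have hone : ∀ z : ℤ, α ^ z = 1 ↔ ((p ^ m - 1 : ℕ) : ℤ) ∣ z := fun z => by
    rw [zpow_primitive_eq_one_iff hα0 hα, hcard]
  have hdQ : IsCoprime ((p ^ m - 1 : ℕ) : ℤ) d := by
    rw [hcast]; exact (Int.isCoprime_iff_gcd_eq_one.mpr hd).symm
  have hTQ : (T : ℤ) ∣ ((p ^ m - 1 : ℕ) : ℤ) := ⟨(p - 1 : ℕ), by rw [hQT]; push_cast; rfl⟩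
  have hdT : IsCoprime (T : ℤ) d := hdQ.of_isCoprime_of_dvd_left hTQ
  have hrT : IsCoprime (T : ℤ) r := by
    rw [hT]; exact Nat.isCoprime_iff_coprime.mpr (coprime_geom hp hrp hrm).symm
  set C : F := α ^ (d * (i : ℤ)) - α ^ (d * ((j : ℤ) + r * τ)) with hC
  have hC0 : C ≠ 0 := by
    intro h
    have h1 : α ^ (d * ((i : ℤ) - (j + r * τ))) = 1 := by
      rw [mul_sub, zpow_sub₀ hα0, sub_eq_zero.mp h, div_self (zpow_ne_zero _ hα0)]
    have h2 := hdQ.dvd_of_dvd_mul_left ((hone _).mp h1)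
    -- both exponents lie in `[0, q - 1)`, so they are equal
    have hlt : j + r * τ < p ^ m - 1 := by rw [hQn]; nlinarith
    have hlt' : i < p ^ m - 1 := by rw [hQn]; nlinarith
    have h3 : (i : ℤ) - (j + r * τ) = 0 := by
      apply Int.eq_zero_of_abs_lt_dvd h2
      rw [abs_lt]
      have a1 : ((j : ℤ) + r * τ) < ((p ^ m - 1 : ℕ) : ℤ) := by exact_mod_cast hlt
      have a2 : (i : ℤ) < ((p ^ m - 1 : ℕ) : ℤ) := by exact_mod_cast hlt'
      have a3 : (0 : ℤ) ≤ r * τ := by positivity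
      constructor <;> linarith [Int.natCast_nonneg i, Int.natCast_nonneg j]
    have h4 : i = j + r * τ := by
      have : (i : ℤ) = j + r * τ := by linarith
      exact_mod_cast this
    have hτ0 : τ = 0 := by
      by_contra hne
      have : 1 ≤ τ := Nat.one_le_iff_ne_zero.mpr hne
      nlinarith
    exact hij ⟨by simpa [hτ0] using h4, hτ0⟩
  -- membership in `A` as membership in the kernel of `𝒯 ∘ ψ`
  have key : ∀ t : ℕ, s i t = s j ((t + τ) % n') ↔
      ∀ l, Algebra.trace (ZMod p) F (w l * ψ (α ^ (d * (r * t : ℤ)) * C)) = 0 := by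
    intro t
    have hper : α ^ (d * ((j : ℤ) + r * ((t + τ) % n' : ℕ))) =
        α ^ (d * ((j : ℤ) + r * (t + τ))) := by
      have h1 : α ^ (d * (((p ^ m - 1 : ℕ) : ℤ) * ((t + τ) / n' : ℕ))) = 1 :=
        (hone _).mpr ⟨d * ((t + τ) / n' : ℕ), by ring⟩
      rw [← mul_one (α ^ (d * ((j : ℤ) + r * ((t + τ) % n' : ℕ)))), ← h1, ← zpow_add₀ hα0]
      congr 1
      have h2 : ((t : ℤ) + τ) = ((t + τ) % n' : ℕ) + (n' : ℤ) * ((t + τ) / n' : ℕ) := by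
        exact_mod_cast (Nat.mod_add_div (t + τ) n').symm
      rw [h2, hQn, Nat.cast_mul]
      ring
    have hsplit : α ^ (d * (r * t : ℤ)) * C =
        α ^ (d * ((i : ℤ) + r * t)) - α ^ (d * ((j : ℤ) + r * (t + τ))) := by
      rw [hC, mul_sub, ← zpow_add₀ hα0, ← zpow_add₀ hα0]
      ring_nf
    rw [funext_iff]
    refine forall_congr' fun l => ?_
    rw [hs, hs, hper, hsplit, hψlin.map_sub, mul_sub, map_sub, sub_eq_zero]
  rcases Set.eq_empty_or_nonempty {t : ℕ | t < n' ∧ s i t = s j ((t + τ) % n')}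
    with h | ⟨t₀, ht₀, hst₀⟩
  · exact Or.inl h
  refine Or.inr ⟨t₀, ht₀, ?_⟩
  ext t
  refine and_congr_right fun _ => ?_
  rw [key] at hst₀ ⊢
  set x := α ^ (d * (r * t₀ : ℤ)) * C with hx
  have hx0 : x ≠ 0 := mul_ne_zero (zpow_ne_zero _ hα0) hC0
  set z := α ^ (d * (r * ((t : ℤ) - t₀))) with hz
  have hzx : α ^ (d * (r * t : ℤ)) * C = z * x := by
    rw [hx, hz, ← mul_assoc (α ^ _), ← zpow_add₀ hα0]
    ring_nf
  have hline : (∀ l, Algebra.trace (ZMod p) F (w l * ψ (z * x)) = 0) ↔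
      ∃ c : ZMod p, z = algebraMap (ZMod p) F c := by
    constructor
    · intro h
      obtain ⟨c, hc⟩ := trace_kernel_line hcard w hw hR ψ hψlin hψbij.injective hx0 hst₀ h
      exact ⟨c, mul_right_cancel₀ hx0 (by rw [hc, Algebra.smul_def])⟩
    · rintro ⟨c, hc⟩ l
      rw [hc, ← Algebra.smul_def, hψlin.map_smul, mul_smul_comm, map_smul, hst₀ l, smul_zero]
  have hmod : t % T = t₀ % T ↔ (T : ℤ) ∣ (t : ℤ) - t₀ :=
    ⟨fun h => (Nat.modEq_iff_dvd (n := T)).mp h.symm,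
      fun h => ((Nat.modEq_iff_dvd (n := T)).mpr h).symm⟩
  rw [hzx, hline, mem_prime_field_iff (zpow_ne_zero _ hα0), hmod, ← zpow_natCast, ← zpow_mul,
    hone, hQT, Nat.cast_mul, mul_dvd_mul_iff_right (by exact_mod_cast hp1.ne')]
  exact ⟨fun h => hrT.dvd_of_dvd_mul_left (hdT.dvd_of_dvd_mul_left h),
    fun h => (h.mul_left _).mul_left _⟩
end

section
/- Let q be a prime power and d a positive integer with gcd(d, q−1) = 1. Let f : F_{q^2} → F_q be a surjective d-form difference-balanced function. Then for every δ ∈ F_{q^2} \ {0, 1} there exists a ∈ F_{q^2} \ {0} such that {x ∈ F_{q^2} : f(δx) − f(x) = 0} = F_q·a = {c·a : c ∈ F_q}. -/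
/-!
Since `f` is a `d`-form function, the zero set of `x ↦ f (δ * x) - f x` is closed under
multiplication by `F`. By difference-balancedness it has `q > 1` elements, so it contains some
`a ≠ 0`, hence the whole line `F * a`. That line also has `q` elements, so the two sets agree.
-/

theorem stmt13 {F F2 : Type*} [Field F] [Fintype F]
    [Field F2] [Fintype F2] [Algebra F F2]
    (q : ℕ) (hq : Fintype.card F = q) (hq2 : Fintype.card F2 = q ^ 2)
    (d : ℕ) (hd : 0 < d) (hdq : Nat.Coprime d (q - 1))
    (f : F2 → F) (hsurj : Function.Surjective f)
    -- f is a d-form function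
    (hform : ∀ (y : F) (x : F2), f (algebraMap F F2 y * x) = y ^ d * f x)
    -- f is difference-balanced
    (hdb : ∀ δ : F2, δ ≠ 0 → δ ≠ 1 → ∀ b : F,
      Nat.card {x : F2 | f (δ * x) - f x = b} = q) :
    ∀ δ : F2, δ ≠ 0 → δ ≠ 1 → ∃ a : F2, a ≠ 0 ∧
      {x : F2 | f (δ * x) - f x = 0} =
        Set.range (fun c : F => algebraMap F F2 c * a) := by
  intro δ h0 h1
  have hcard : {x : F2 | f (δ * x) - f x = 0}.ncard = q := hdb δ h0 h1 0
  have hq1 : 1 < q := hq ▸ Fintype.one_lt_card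
  obtain ⟨a, haS, ha⟩ := Set.exists_ne_of_one_lt_ncard (hcard ▸ hq1) (0 : F2)
  refine ⟨a, ha, ?_⟩
  have hsub : Set.range (fun c : F => algebraMap F F2 c * a) ⊆
      {x : F2 | f (δ * x) - f x = 0} := by
    rintro _ ⟨c, rfl⟩
    simp only [Set.mem_setOf_eq] at haS ⊢
    rw [mul_left_comm, hform, hform, ← mul_sub, haS, mul_zero]
  have hinj : Function.Injective (fun c : F => algebraMap F F2 c * a) := fun c c' h =>
    (algebraMap F F2).injective (mul_right_cancel₀ ha h)
  have hrange : (Set.range (fun c : F => algebraMap F F2 c * a)).ncard = q := by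
    rw [← Set.image_univ, Set.ncard_image_of_injective _ hinj, Set.ncard_univ,
      Nat.card_eq_fintype_card, hq]
  exact (Set.eq_of_subset_of_ncard_le hsub (hcard.trans hrange.symm).le).symm
end

section
/- Let p be an odd prime, q = p^m, θ a primitive element of F_{q^2}, and r an odd positive divisor of q − 1; set n' = (q^2−1)/r. Let w = (a_0, …, a_{k−1}) ∈ F_q^k be a nonzero vector with R(w) = m. Let d be a positive integer with gcd(d, q−1) = 1 and let f : F_{q^2} → F_q be a surjective d-form difference-balanced function. Define r sequences S^i = (s^i_t)_{t=0}^{n'−1}, 0 ≤ i ≤ r−1, by s^i_t = 𝒯(f(θ^{i+rt})). Then for every window length L with 1 ≤ L ≤ n', the maximum partial Hamming correlation of 𝓢 = {S^0, …, S^{r−1}} satisfies M(𝓢; L) = ⌈L/(q+1)⌉. -/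
/-- A window of length `L` meets a residue class modulo `N` at most `⌈L / N⌉` times. -/
theorem card_window_le_s14 (N L l c : ℕ) (hN : 0 < N) :
    Nat.card {t : ℕ | l ≤ t ∧ t < l + L ∧ t ≡ c [MOD N]} ≤ (L + N - 1) / N := by
  have hmap : ∀ t ∈ {t : ℕ | l ≤ t ∧ t < l + L ∧ t ≡ c [MOD N]},
      (t - l) / N ∈ Set.Iio ((L + N - 1) / N) := by
    rintro t ⟨h1, h2, -⟩
    rw [Set.mem_Iio, Nat.lt_iff_add_one_le, Nat.le_div_iff_mul_le hN, add_mul]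
    have := Nat.div_mul_le_self (t - l) N
    omega
  have hinj : Set.InjOn (fun t : ℕ => (t - l) / N)
      {t : ℕ | l ≤ t ∧ t < l + L ∧ t ≡ c [MOD N]} := by
    rintro a ⟨ha, -, hac⟩ b ⟨hb, -, hbc⟩ hab
    have hmod : a - l ≡ b - l [MOD N] := by
      apply Nat.ModEq.add_left_cancel' l
      rw [Nat.add_sub_cancel' ha, Nat.add_sub_cancel' hb]
      exact hac.trans hbc.symm
    have hab' : (a - l) / N = (b - l) / N := hab
    have e1 := Nat.div_add_mod (a - l) N
    have e2 := Nat.div_add_mod (b - l) N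
    have : (a - l) % N = (b - l) % N := hmod
    rw [hab', this] at e1
    omega
  have h := Set.ncard_le_ncard_of_injOn _ hmap hinj (Set.finite_Iio _)
  rw [← Nat.card_coe_set_eq, ← Nat.card_coe_set_eq] at h
  simpa using h

/-- A window that starts in the residue class meets it `⌈L / N⌉` times. -/
theorem le_card_window (N L c : ℕ) (hN : 0 < N) :
    (L + N - 1) / N ≤ Nat.card {t : ℕ | c ≤ t ∧ t < c + L ∧ t ≡ c [MOD N]} := by
  have hmap : ∀ k ∈ Set.Iio ((L + N - 1) / N),
      c + N * k ∈ {t : ℕ | c ≤ t ∧ t < c + L ∧ t ≡ c [MOD N]} := by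
    intro k hk
    rw [Set.mem_Iio, Nat.lt_iff_add_one_le, Nat.le_div_iff_mul_le hN, add_mul, mul_comm k] at hk
    refine ⟨by omega, by omega, ?_⟩
    simp [Nat.ModEq]
  have hinj : Set.InjOn (fun k : ℕ => c + N * k) (Set.Iio ((L + N - 1) / N)) := by
    intro a _ b _ hab
    have : N * a = N * b := Nat.add_left_cancel hab
    exact Nat.eq_of_mul_eq_mul_left hN this
  have hfin : {t : ℕ | c ≤ t ∧ t < c + L ∧ t ≡ c [MOD N]}.Finite :=
    (Set.finite_Iio (c + L)).subset fun t ht => ht.2.1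
  have h := Set.ncard_le_ncard_of_injOn _ hmap hinj hfin
  rw [← Nat.card_coe_set_eq, ← Nat.card_coe_set_eq] at h
  simpa using h

/-- The map `𝒯` is injective when the entries of `w` span `F`. -/
theorem trace_vector_injective {p m k : ℕ} [Fact p.Prime] {F : Type*} [Field F] [Fintype F]
    [Algebra (ZMod p) F] (hcard : Fintype.card F = p ^ m) (w : Fin k → F)
    (hR : Module.finrank (ZMod p) (Submodule.span (ZMod p) (Set.range w)) = m) {u v : F}
    (h : ∀ idx, Algebra.trace (ZMod p) F (w idx * u) = Algebra.trace (ZMod p) F (w idx * v)) :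
    u = v := by
  have hfin : Module.finrank (ZMod p) F = m := by
    have := Module.card_eq_pow_finrank (K := ZMod p) (V := F)
    rw [hcard, ZMod.card] at this
    exact (Nat.pow_right_injective (Fact.out : p.Prime).two_le this).symm
  have htop : Submodule.span (ZMod p) (Set.range w) = ⊤ :=
    Submodule.eq_top_of_finrank_eq (hR.trans hfin.symm)
  rw [← sub_eq_zero]
  apply (traceForm_nondegenerate (ZMod p) F).2
  intro y
  have hy : y ∈ Submodule.span (ZMod p) (Set.range w) := htop ▸ Submodule.mem_top
  induction hy using Submodule.span_induction with
  | mem x hx =>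
    obtain ⟨idx, rfl⟩ := hx
    rw [Algebra.traceForm_apply, mul_sub, map_sub, h, sub_self]
  | zero => simp
  | add x y _ _ hx hy => rw [map_add, LinearMap.add_apply, hx, hy, add_zero]
  | smul a x _ hx => rw [map_smul, LinearMap.smul_apply, hx, smul_zero]

theorem mem_range_algebraMap_of_pow_eq {F E : Type*} [Field F] [Fintype F] [Field E]
    [Algebra F E] (z : E) (hz : z ^ Fintype.card F = z) : ∃ y : F, algebraMap F E y = z := by
  classical
  let P : Polynomial E := Polynomial.X ^ Fintype.card F - Polynomial.X
  have hP : P ≠ 0 := FiniteField.X_pow_card_sub_X_ne_zero E Fintype.one_lt_card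
  have hmem : ∀ x : E, x ∈ P.roots.toFinset ↔ x ^ Fintype.card F = x := by
    intro x
    rw [Multiset.mem_toFinset, Polynomial.mem_roots hP]
    simp [P, sub_eq_zero]
  have hsub : Finset.univ.image (algebraMap F E) ⊆ P.roots.toFinset := by
    intro x hx
    obtain ⟨y, -, rfl⟩ := Finset.mem_image.1 hx
    rw [hmem, ← map_pow, FiniteField.pow_card]
  have hle : P.roots.toFinset.card ≤ (Finset.univ.image (algebraMap F E)).card := by
    rw [Finset.card_image_of_injective _ (algebraMap F E).injective, Finset.card_univ]
    refine (Multiset.toFinset_card_le _).trans ((Polynomial.card_roots' P).trans ?_)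
    rw [FiniteField.X_pow_card_sub_X_natDegree_eq E Fintype.one_lt_card]
  have h := Finset.eq_of_subset_of_card_le hsub hle
  have hz' := (hmem z).2 hz
  rw [← h] at hz'
  obtain ⟨y, -, hy⟩ := Finset.mem_image.1 hz'
  exact ⟨y, hy⟩

theorem pow_eq_pow_iff_of_primitive {E : Type*} [Field E] [Fintype E] (θ : E) (hθ0 : θ ≠ 0)
    (hθ : ∀ x : E, x ≠ 0 → ∃ s : ℕ, θ ^ s = x) (a b : ℕ) :
    θ ^ a = θ ^ b ↔ a ≡ b [MOD Fintype.card E - 1] := by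
  have hord : orderOf (Units.mk0 θ hθ0) = Fintype.card E - 1 := by
    rw [orderOf_eq_card_of_forall_mem_zpowers, Nat.card_units, Nat.card_eq_fintype_card]
    intro x
    obtain ⟨s, hs⟩ := hθ x x.ne_zero
    exact ⟨s, Units.ext (by simpa using hs)⟩
  rw [← hord, ← pow_eq_pow_iff_modEq, Units.ext_iff]
  simp

/-- `θ ^ a` and `θ ^ b` span the same `F`-line exactly when `a ≡ b` modulo `q + 1`. -/
theorem pow_mem_line_iff {q : ℕ} {F E : Type*} [Field F] [Fintype F] [Field E] [Fintype E]
    [Algebra F E] (hcard : Fintype.card F = q) (hcard2 : Fintype.card E = q ^ 2) (θ : E)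
    (hθ0 : θ ≠ 0) (hθ : ∀ x : E, x ≠ 0 → ∃ s : ℕ, θ ^ s = x) (a b : ℕ) :
    (∃ y : F, algebraMap F E y * θ ^ b = θ ^ a) ↔ a ≡ b [MOD q + 1] := by
  have hq : 1 < q := hcard ▸ Fintype.one_lt_card
  have hfac : q ^ 2 - 1 = (q - 1) * (q + 1) := by
    rw [mul_comm, ← Nat.sq_sub_sq, one_pow]
  -- Raising to the power `q - 1` kills `F`-multiples and cancels the factor `q - 1` of `q ^ 2 - 1`.
  have key : θ ^ ((q - 1) * a) = θ ^ ((q - 1) * b) ↔ a ≡ b [MOD q + 1] := by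
    rw [pow_eq_pow_iff_of_primitive θ hθ0 hθ, hcard2, hfac]
    exact ⟨fun h => Nat.ModEq.mul_left_cancel' (by omega) h, fun h => Nat.ModEq.mul_left' _ h⟩
  rw [← key]
  constructor
  · rintro ⟨y, hy⟩
    have hy0 : y ≠ 0 := by
      rintro rfl
      exact pow_ne_zero a hθ0 (by simpa using hy.symm)
    rw [mul_comm _ a, pow_mul, ← hy, mul_pow, ← map_pow, ← hcard,
      FiniteField.pow_card_sub_one_eq_one y hy0, map_one, one_mul, mul_comm _ b, pow_mul]
  · intro h
    have hz : (θ ^ a / θ ^ b) ^ Fintype.card F = θ ^ a / θ ^ b := by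
      have h1 : (θ ^ a / θ ^ b) ^ (q - 1) = 1 := by
        rw [div_pow, ← pow_mul, ← pow_mul, mul_comm a, mul_comm b, h,
          div_self (pow_ne_zero _ hθ0)]
      rw [hcard, ← Nat.sub_add_cancel hq.le, pow_succ, h1, one_mul]
    obtain ⟨y, hy⟩ := mem_range_algebraMap_of_pow_eq (F := F) _ hz
    exact ⟨y, by rw [hy, div_mul_cancel₀ _ (pow_ne_zero _ hθ0)]⟩

/-- The solution set of `f (δ * x) = f x` is stable under scaling by `F` and has `q` elements,
hence it is the `F`-line through any of its nonzero members. -/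
theorem solutions_eq_line {q d : ℕ} {F E : Type*} [Field F] [Fintype F] [Field E] [Fintype E]
    [Algebra F E] (hcard : Fintype.card F = q) (f : E → F)
    (hform : ∀ (y : F) (x : E), f (algebraMap F E y * x) = y ^ d * f x) (δ : E)
    (hdb : Nat.card {x : E | f (δ * x) - f x = 0} = q) :
    ∃ x₀ : E, x₀ ≠ 0 ∧ ∀ x, f x = f (δ * x) ↔ ∃ y : F, algebraMap F E y * x₀ = x := by
  have hq : 1 < q := hcard ▸ Fintype.one_lt_card
  rw [Nat.card_coe_set_eq] at hdb
  obtain ⟨x₀, hx₀, hne⟩ := Set.exists_ne_of_one_lt_ncard (hdb ▸ hq) 0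
  have hsub : Set.range (fun y : F => algebraMap F E y * x₀) ⊆ {x : E | f (δ * x) - f x = 0} := by
    rintro _ ⟨y, rfl⟩
    have hx₀' : f (δ * x₀) - f x₀ = 0 := hx₀
    change f (δ * (algebraMap F E y * x₀)) - f (algebraMap F E y * x₀) = 0
    rw [mul_left_comm, hform, hform, ← mul_sub, hx₀', mul_zero]
  have hinj : Function.Injective (fun y : F => algebraMap F E y * x₀) := fun a b hab =>
    (algebraMap F E).injective (mul_right_cancel₀ hne hab)
  have heq := Set.eq_of_subset_of_ncard_le hsub (by
    rw [hdb, ← Set.image_univ, Set.ncard_image_of_injective _ hinj, Set.ncard_univ,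
      Nat.card_eq_fintype_card, hcard]) (Set.toFinite _)
  refine ⟨x₀, hne, fun x => ?_⟩
  have := Set.ext_iff.1 heq x
  simp only [Set.mem_range, Set.mem_ofPred_eq, sub_eq_zero] at this
  rw [this, eq_comm]

theorem exists_residue {N r : ℕ} (hN : 0 < N) (hco : Nat.Coprime r N) (i e : ℕ) :
    ∃ c < N, ∀ t, i + r * t ≡ e [MOD N] ↔ t ≡ c [MOD N] := by
  obtain ⟨c, hcN, hc⟩ := Nat.exists_mul_mod_eq_of_coprime (e + (N - 1) * i) hco hN.ne'
  have h0 : i + r * c ≡ e [MOD N] := by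
    have h1 : r * c ≡ e + (N - 1) * i [MOD N] := hc
    have h2 : i + (e + (N - 1) * i) = e + N * i := by
      obtain ⟨M, rfl⟩ : ∃ M, N = M + 1 := ⟨N - 1, by omega⟩
      simp only [Nat.add_sub_cancel]
      ring
    refine (h1.add_left i).trans ?_
    rw [h2]
    simp [Nat.ModEq]
  refine ⟨c, hcN, fun t => ⟨fun h => ?_, fun h => ((h.mul_left r).add_left i).trans h0⟩⟩
  exact Nat.ModEq.cancel_left_of_coprime hco.symm (Nat.ModEq.add_left_cancel' i (h.trans h0.symm))

theorem stmt14 (p m k : ℕ) (hp : p.Prime) (hpodd : Odd p) (hm : 0 < m)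
    (hk : 0 < k) (q : ℕ) (hqdef : q = p ^ m)
    {F F2 : Type*} [Field F] [Fintype F] [Algebra (ZMod p) F]
    [Field F2] [Fintype F2] [Algebra F F2]
    (hcard : Fintype.card F = q) (hcard2 : Fintype.card F2 = q ^ 2)
    -- θ is a primitive element of F2
    (θ : F2) (hθ0 : θ ≠ 0) (hθ : ∀ x : F2, x ≠ 0 → ∃ s : ℕ, θ ^ s = x)
    -- r is an odd positive divisor of q - 1
    (r : ℕ) (hr : 0 < r) (hrodd : Odd r) (hrq : r ∣ q - 1)
    (n' : ℕ) (hn' : n' = (q ^ 2 - 1) / r)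
    (w : Fin k → F) (hw : w ≠ 0)
    (hR : Module.finrank (ZMod p) (Submodule.span (ZMod p) (Set.range w)) = m)
    (d : ℕ) (hd : 0 < d) (hdq : Nat.Coprime d (q - 1))
    (f : F2 → F) (hsurj : Function.Surjective f)
    -- f is a d-form function
    (hform : ∀ (y : F) (x : F2), f (algebraMap F F2 y * x) = y ^ d * f x)
    -- f is difference-balanced
    (hdb : ∀ δ : F2, δ ≠ 0 → δ ≠ 1 → ∀ b : F,
      Nat.card {x : F2 | f (δ * x) - f x = b} = q)
    -- the family of r sequences s^i_t = 𝒯(f(θ^{i+rt}))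
    (s : ℕ → ℕ → (Fin k → ZMod p))
    (hs : ∀ (i t : ℕ) (idx : Fin k),
      s i t idx = Algebra.trace (ZMod p) F (w idx * f (θ ^ (i + r * t)))) :
    -- the maximum partial Hamming correlation equals ⌈L/(q+1)⌉
    ∀ L : ℕ, 1 ≤ L → L ≤ n' →
      (∀ i < r, ∀ j < r, ∀ l < n', ∀ τ < n', ¬(i = j ∧ τ = 0) →
        Hcorr n' L l τ (s i) (s j) ≤ (L + (q + 1) - 1) / (q + 1)) ∧
      (∃ i < r, ∃ j < r, ∃ l < n', ∃ τ < n', ¬(i = j ∧ τ = 0) ∧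
        Hcorr n' L l τ (s i) (s j) = (L + (q + 1) - 1) / (q + 1)) := by
  have : Fact p.Prime := ⟨hp⟩
  have hq : 1 < q := hcard ▸ Fintype.one_lt_card
  have hfac : q ^ 2 - 1 = (q - 1) * (q + 1) := by
    rw [mul_comm, ← Nat.sq_sub_sq, one_pow]
  have hrn : r * n' = q ^ 2 - 1 := by
    rw [hn']
    exact Nat.mul_div_cancel' (hfac ▸ hrq.mul_right _)
  have hqn : q + 1 ≤ n' := by
    obtain ⟨g, hg⟩ := hrq
    have hg0 : 0 < g := Nat.pos_of_ne_zero (by rintro rfl; omega)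
    have : n' = g * (q + 1) := by
      apply Nat.eq_of_mul_eq_mul_left hr
      rw [hrn, hfac, hg, mul_assoc]
    rw [this]
    exact Nat.le_mul_of_pos_left _ hg0
  have hco : Nat.Coprime r (q + 1) := by
    have h2 : Nat.gcd r (q + 1) ∣ 2 := by
      have h := Nat.dvd_sub (Nat.gcd_dvd_right r (q + 1)) ((Nat.gcd_dvd_left r (q + 1)).trans hrq)
      have e : q + 1 - (q - 1) = 2 := by omega
      rwa [e] at h
    have h3 : Nat.Coprime r 2 := hrodd.coprime_two_right
    exact Nat.eq_one_of_dvd_coprimes h3 (Nat.gcd_dvd_left _ _) h2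
  have hpow := pow_eq_pow_iff_of_primitive θ hθ0 hθ
  rw [hcard2, ← hrn] at hpow
  have hred : ∀ i t : ℕ, θ ^ (i + r * (t % n')) = θ ^ (i + r * t) := fun i t =>
    (hpow _ _).2 (((Nat.mod_modEq t n').mul_left' r).add_left i)
  -- Coincidences at a nontrivial shift happen exactly along one residue class modulo `q + 1`.
  have key : ∀ i < r, ∀ j < r, ∀ τ < n', ¬(i = j ∧ τ = 0) →
      ∃ c < q + 1, ∀ t, s i (t % n') = s j ((t + τ) % n') ↔ t ≡ c [MOD q + 1] := by
    intro i hi j hj τ hτ hne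
    have hθi : θ ^ i ≠ 0 := pow_ne_zero _ hθ0
    obtain ⟨x₀, hx₀, hline⟩ := solutions_eq_line hcard f hform (θ ^ (j + r * τ) / θ ^ i)
      (hdb _ (div_ne_zero (pow_ne_zero _ hθ0) hθi) (by
        intro h1
        have h2 : j + r * τ ≡ i [MOD r * n'] := (hpow _ _).1 ((div_eq_one_iff_eq hθi).1 h1)
        have hlt : j + r * τ < r * n' := by nlinarith
        have hlt' : i < r * n' := by nlinarith
        have h3 := h2.eq_of_lt_of_lt hlt hlt'
        rcases Nat.eq_zero_or_pos τ with h0 | h0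
        · subst h0
          exact hne ⟨by omega, rfl⟩
        · nlinarith) 0)
    obtain ⟨e, rfl⟩ := hθ x₀ hx₀
    obtain ⟨c, hc, hres⟩ := exists_residue (Nat.succ_pos q) hco i e
    refine ⟨c, hc, fun t => ?_⟩
    have hshift : θ ^ (j + r * τ) / θ ^ i * θ ^ (i + r * t) = θ ^ (j + r * (t + τ)) := by
      rw [pow_add θ i, ← mul_assoc, div_mul_cancel₀ _ hθi, ← pow_add]
      congr 1
      ring
    rw [← hres, ← pow_mem_line_iff hcard hcard2 θ hθ0 hθ, ← hline, hshift]
    constructor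
    · intro h
      refine trace_vector_injective (hcard.trans hqdef) w hR fun idx => ?_
      have := congrFun h idx
      rwa [hs, hs, hred, hred] at this
    · intro h
      funext idx
      rw [hs, hs, hred, hred, h]
  intro L hL hLn
  constructor
  · intro i hi j hj l _ τ hτ hne
    obtain ⟨c, -, hc⟩ := key i hi j hj τ hτ hne
    unfold Hcorr
    simp only [hc]
    exact card_window_le_s14 (q + 1) L l c (Nat.succ_pos q)
  · have hne : ¬((0 : ℕ) = 0 ∧ (1 : ℕ) = 0) := by omega
    obtain ⟨c, hcq, hc⟩ := key 0 hr 0 hr 1 (by omega) hne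
    refine ⟨0, hr, 0, hr, c, by omega, 1, by omega, hne, ?_⟩
    unfold Hcorr
    simp only [hc]
    exact le_antisymm (card_window_le_s14 (q + 1) L c c (Nat.succ_pos q))
      (le_card_window (q + 1) L c (Nat.succ_pos q))
end

section
/- Let p be an odd prime, q = p^m, θ a primitive element of F_{q^2}, and r an odd positive divisor of q − 1; set n' = (q^2−1)/r. Let d be a positive integer with gcd(d, q−1) = 1 and let f : F_{q^2} → F_q be a surjective d-form difference-balanced function. Fix i, j ∈ {0, …, r−1} and τ ∈ {0, …, n'−1}, excluding the case (i = j and τ = 0). Then the set A = {t ∈ {0, …, n'−1} : f(θ^{i+rt}) = f(θ^{j+r((t+τ) mod n')})} is either empty, or there exists t_0 ∈ {0, …, n'−1} such that A = {t ∈ {0, …, n'−1} : t ≡ t_0 (mod q+1)}. -/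
/-!
Put `x = θ ^ (i + r t)` and `δ = θ ^ (j + r τ) / θ ^ i`. Since `θ ^ (r n') = 1`, the defining
equation of the set is `f (δ x) = f x`, and `δ ≠ 1` because `θ` has order `r n' = q² - 1`.
Homogeneity makes the solution set of `f (δ x) = f x` stable under multiplication by `F`, and
difference-balancedness says that it has exactly `q` elements; so as soon as it has a nonzero
element `x₀` it is the line `F x₀` (`sol_iff_mem_line`). Finally `θ ^ (i + r t)` lies on the line of
`θ ^ (i + r t₀)` iff the quotient is fixed by `z ↦ z ^ q` (`mem_range_iff_pow_eq`), that is, iff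
`r t ≡ r t₀` modulo `q + 1`, and `r` is coprime to `q + 1`, being odd and a divisor of `q - 1`.
-/

/-- A finite subfield of order `q` is the fixed set of `z ↦ z ^ q`: it already exhausts the at most
`q` roots of `X ^ q - X`. -/
theorem mem_range_iff_pow_eq {F K : Type*} [Field F] [Fintype F] [Field K] [Algebra F K]
    (z : K) : (∃ y : F, algebraMap F K y = z) ↔ z ^ Fintype.card F = z := by
  classical
  constructor
  · rintro ⟨y, rfl⟩
    rw [← map_pow, FiniteField.pow_card]
  · intro hz
    have hne := FiniteField.X_pow_card_sub_X_ne_zero K (Fintype.one_lt_card (α := F))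
    have hsub : Finset.univ.image (algebraMap F K) ⊆
        (Polynomial.X ^ Fintype.card F - Polynomial.X : Polynomial K).roots.toFinset := by
      intro w hw
      obtain ⟨y, -, rfl⟩ := Finset.mem_image.1 hw
      simp [hne, ← map_pow, FiniteField.pow_card]
    have hcard : (Polynomial.X ^ Fintype.card F - Polynomial.X :
        Polynomial K).roots.toFinset.card ≤ (Finset.univ.image (algebraMap F K)).card := by
      rw [Finset.card_image_of_injective _ (algebraMap F K).injective, Finset.card_univ]
      refine (Multiset.toFinset_card_le _).trans ((Polynomial.card_roots' _).trans ?_)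
      rw [FiniteField.X_pow_card_sub_X_natDegree_eq K (Fintype.one_lt_card (α := F))]
    have hmem : z ∈ Finset.univ.image (algebraMap F K) := by
      rw [Finset.eq_of_subset_of_card_le hsub hcard]
      simp [hne, hz]
    obtain ⟨y, -, hy⟩ := Finset.mem_image.1 hmem
    exact ⟨y, hy⟩

/-- If `f (δ x) = f x` has exactly `|F|` solutions, it is solved precisely on the `F`-line through
any one nonzero solution. -/
theorem sol_iff_mem_line {F K : Type*} [Field F] [Fintype F] [Field K] [Fintype K] [Algebra F K]
    (d : ℕ) (f : K → F) (hform : ∀ (y : F) (x : K), f (algebraMap F K y * x) = y ^ d * f x)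
    (δ : K) (hδ : Nat.card {x : K | f (δ * x) - f x = 0} = Fintype.card F)
    (x₀ : K) (hx₀ : x₀ ≠ 0) (h₀ : f (δ * x₀) = f x₀) (x : K) :
    f (δ * x) = f x ↔ ∃ y : F, algebraMap F K y * x₀ = x := by
  have hinj : Function.Injective fun y : F => algebraMap F K y * x₀ := fun a b hab =>
    (algebraMap F K).injective (mul_right_cancel₀ hx₀ hab)
  have hsub : Set.range (fun y : F => algebraMap F K y * x₀) ⊆
      {x : K | f (δ * x) - f x = 0} := by
    rintro _ ⟨y, rfl⟩
    simp only [Set.mem_ofPred_eq]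
    rw [mul_left_comm, hform, hform, h₀, sub_self]
  have heq : Set.range (fun y : F => algebraMap F K y * x₀) = {x : K | f (δ * x) - f x = 0} := by
    refine Set.eq_of_subset_of_ncard_le hsub ?_ (Set.toFinite _)
    rw [← Nat.card_coe_set_eq, ← Nat.card_coe_set_eq, hδ, Nat.card_range_of_injective hinj,
      Nat.card_eq_fintype_card]
  rw [← sub_eq_zero]
  exact (Set.ext_iff.1 heq x).symm

theorem orderOf_of_forall_eq_pow {K : Type*} [Field K] [Fintype K] (θ : K) (hθ0 : θ ≠ 0)
    (hθ : ∀ x : K, x ≠ 0 → ∃ s : ℕ, θ ^ s = x) : orderOf θ = Fintype.card K - 1 := by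
  have h := orderOf_eq_card_of_forall_mem_zpowers (g := Units.mk0 θ hθ0) (fun x => by
    obtain ⟨s, hs⟩ := hθ x x.ne_zero
    exact ⟨s, Units.ext (by simpa using hs)⟩)
  rw [Nat.card_units, Nat.card_eq_fintype_card, ← orderOf_units] at h
  simpa using h

theorem stmt16 (p m : ℕ) (hp : p.Prime) (hpodd : Odd p) (hm : 0 < m)
    (q : ℕ) (hqdef : q = p ^ m)
    {F F2 : Type*} [Field F] [Fintype F]
    [Field F2] [Fintype F2] [Algebra F F2]
    (hcard : Fintype.card F = q) (hcard2 : Fintype.card F2 = q ^ 2)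
    -- θ is a primitive element of F2
    (θ : F2) (hθ0 : θ ≠ 0) (hθ : ∀ x : F2, x ≠ 0 → ∃ s : ℕ, θ ^ s = x)
    -- r is an odd positive divisor of q - 1
    (r : ℕ) (hr : 0 < r) (hrodd : Odd r) (hrq : r ∣ q - 1)
    (n' : ℕ) (hn' : n' = (q ^ 2 - 1) / r)
    (d : ℕ) (hd : 0 < d) (hdq : Nat.Coprime d (q - 1))
    (f : F2 → F) (hsurj : Function.Surjective f)
    -- f is a d-form function
    (hform : ∀ (y : F) (x : F2), f (algebraMap F F2 y * x) = y ^ d * f x)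
    -- f is difference-balanced
    (hdb : ∀ δ : F2, δ ≠ 0 → δ ≠ 1 → ∀ b : F,
      Nat.card {x : F2 | f (δ * x) - f x = b} = q)
    (i j τ : ℕ) (hi : i < r) (hj : j < r) (hτ : τ < n') (hij : ¬(i = j ∧ τ = 0)) :
    {t : ℕ | t < n' ∧ f (θ ^ (i + r * t)) = f (θ ^ (j + r * ((t + τ) % n')))} = ∅ ∨
    ∃ t₀ < n',
      {t : ℕ | t < n' ∧ f (θ ^ (i + r * t)) = f (θ ^ (j + r * ((t + τ) % n')))} =
        {t : ℕ | t < n' ∧ t % (q + 1) = t₀ % (q + 1)} := by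
  have hq3 : 3 ≤ q := by
    have h2 := hp.two_le
    have hp3 : 3 ≤ p := by
      obtain ⟨k, hk⟩ := hpodd
      omega
    rw [hqdef]
    exact hp3.trans (Nat.le_self_pow hm.ne' p)
  have hfac : q ^ 2 - 1 = (q - 1) * (q + 1) := by
    rw [mul_comm]
    simpa using Nat.sq_sub_sq q 1
  have hord : orderOf θ = (q - 1) * (q + 1) := by
    rw [orderOf_of_forall_eq_pow θ hθ0 hθ, hcard2, hfac]
  have hrn : r * n' = (q - 1) * (q + 1) := by
    rw [hn', hfac]
    exact Nat.mul_div_cancel' (hrq.mul_right _)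
  have hpow : ∀ a b : ℕ, θ ^ a = θ ^ b ↔ a ≡ b [MOD (q - 1) * (q + 1)] := by
    intro a b
    have h := pow_inj_mod (x := Units.mk0 θ hθ0) (n := a) (m := b)
    rw [← orderOf_units, Units.val_mk0, hord, Units.ext_iff] at h
    simpa [Nat.ModEq] using h
  have hcop : Nat.Coprime (q + 1) r := by
    have h2 : Nat.gcd (q + 1) r ∣ 2 := by
      have ha : Nat.gcd (q + 1) r ∣ q + 1 := Nat.gcd_dvd_left _ _
      have hb : Nat.gcd (q + 1) r ∣ q - 1 := (Nat.gcd_dvd_right _ _).trans hrq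
      have hc := Nat.dvd_sub ha hb
      rwa [show q + 1 - (q - 1) = 2 by omega] at hc
    have h3 : Nat.Coprime (Nat.gcd (q + 1) r) 2 :=
      (hrodd.of_dvd_nat (Nat.gcd_dvd_right _ _)).coprime_two_right
    exact Nat.Coprime.eq_one_of_dvd h3 h2
  have hi0 : θ ^ i ≠ 0 := pow_ne_zero _ hθ0
  obtain ⟨δ, hδ⟩ : ∃ δ : F2, δ * θ ^ i = θ ^ (j + r * τ) := ⟨_, div_mul_cancel₀ _ hi0⟩
  have hδ0 : δ ≠ 0 := by
    rintro rfl
    rw [zero_mul] at hδ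
    exact pow_ne_zero _ hθ0 hδ.symm
  have hδ1 : δ ≠ 1 := by
    rintro rfl
    rw [one_mul, hpow, ← hrn] at hδ
    have hir : i = j := by
      have h := hδ.of_mul_right n'
      rw [Nat.ModEq, Nat.add_mul_mod_self_left, Nat.mod_eq_of_lt hi, Nat.mod_eq_of_lt hj] at h
      exact h
    subst hir
    have h0 : r * 0 ≡ r * τ [MOD r * n'] := Nat.ModEq.add_left_cancel' i (by simpa using hδ)
    have h1 := Nat.ModEq.mul_left_cancel' hr.ne' h0
    rw [Nat.ModEq, Nat.zero_mod, Nat.mod_eq_of_lt hτ] at h1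
    exact hij ⟨rfl, h1.symm⟩
  have hshift : ∀ t, θ ^ (j + r * ((t + τ) % n')) = δ * θ ^ (i + r * t) := by
    intro t
    rw [pow_add θ i, ← mul_assoc, hδ, ← pow_add, hpow, ← hrn, add_assoc, ← mul_add, add_comm τ t]
    exact Nat.ModEq.add_left _ (Nat.ModEq.mul_left' r (Nat.mod_modEq _ _))
  simp only [hshift]
  rcases Set.eq_empty_or_nonempty
    {t : ℕ | t < n' ∧ f (θ ^ (i + r * t)) = f (δ * θ ^ (i + r * t))} with h | ⟨t₀, ht₀, hA⟩
  · exact Or.inl h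
  refine Or.inr ⟨t₀, ht₀, ?_⟩
  ext t
  refine and_congr_right fun _ => ?_
  have hx0 : θ ^ (i + r * t₀) ≠ 0 := pow_ne_zero _ hθ0
  rw [eq_comm, sol_iff_mem_line d f hform δ (by rw [hcard]; exact hdb δ hδ0 hδ1 0) _ hx0 hA.symm]
  simp only [← eq_div_iff hx0]
  rw [mem_range_iff_pow_eq, hcard, div_pow, div_eq_div_iff (pow_ne_zero _ hx0) hx0,
    ← pow_mul, ← pow_mul, ← pow_add, ← pow_add, hpow]
  -- Both exponents share a summand; what remains is a congruence between multiples of `q - 1`.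
  obtain ⟨k, rfl⟩ : ∃ k, q = k + 1 := ⟨q - 1, by omega⟩
  simp only [Nat.add_sub_cancel]
  rw [show (i + r * t) * (k + 1) + (i + r * t₀)
      = (2 * i + r * t + r * t₀ + k * i) + k * (r * t) by ring,
    show i + r * t + (i + r * t₀) * (k + 1)
      = (2 * i + r * t + r * t₀ + k * i) + k * (r * t₀) by ring]
  constructor
  · intro h
    have h1 := Nat.ModEq.mul_left_cancel' (by omega) (Nat.ModEq.add_left_cancel' _ h)
    exact Nat.ModEq.cancel_left_of_coprime hcop h1
  · intro h
    exact Nat.ModEq.add_left _ (Nat.ModEq.mul_left' k (Nat.ModEq.mul_left r h))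
end
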